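/- Let n ≥ 2, R > 0, and let B_R(0) be the open ball of radius R centered at the origin in ℝⁿ. Let u be smooth on the closure of B_R(0) with ∫_{B_R(0)} u dx = 0 and ∂u/∂n = ∂(Δu)/∂n = 0 on ∂B_R(0). Then ∫_{B_R(0)} |Δu|² dx ≥ μ₁(B_R(0))² · ∫_{B_R(0)} |u|² dx, and equality holds if and only if u satisfies Δu = −μ₁(B_R(0))·u in B_R(0). -/

import Mathlib

open MeasureTheory Set Metric

noncomputable section

/-- The Laplacian of `f` (sum of second partial derivatives), with all derivatives
taken within the set `S`. -/
def lapWithin {n : ℕ} (S : Set (EuclideanSpace ℝ (Fin n)))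
    (f : EuclideanSpace ℝ (Fin n) → ℝ) (x : EuclideanSpace ℝ (Fin n)) : ℝ :=
  ∑ i : Fin n, fderivWithin ℝ
    (fun y => fderivWithin ℝ f S y (EuclideanSpace.single i 1)) S x (EuclideanSpace.single i 1)

/-- `μ` is a Neumann eigenvalue of the Laplacian on the ball `B_R(0) ⊂ ℝⁿ`: there is a nonzero
function `u`, smooth on the closed ball, with `Δu = −μ·u` in the open ball and vanishing outward
normal (i.e. radial) derivative on the boundary sphere. -/
def IsLapNeumannEigenvalueBall (n : ℕ) (R μ : ℝ) : Prop :=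
  ∃ u : EuclideanSpace ℝ (Fin n) → ℝ,
    ContDiffOn ℝ (⊤ : ℕ∞) u (closedBall 0 R) ∧
    (∃ x ∈ closedBall (0 : EuclideanSpace ℝ (Fin n)) R, u x ≠ 0) ∧
    (∀ x ∈ ball (0 : EuclideanSpace ℝ (Fin n)) R,
      lapWithin (closedBall 0 R) u x = -μ * u x) ∧
    (∀ x : EuclideanSpace ℝ (Fin n), ‖x‖ = R →
      fderivWithin ℝ u (closedBall 0 R) x (‖x‖⁻¹ • x) = 0)

/-- `Υ` is a Neumann eigenvalue of the bi-harmonic operator `Δ²` on the ball `B_R(0) ⊂ ℝⁿ`: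
there is a nonzero function `u`, smooth on the closed ball, with `Δ²u = Υ·u` in the open ball and
`∂u/∂n = ∂(Δu)/∂n = 0` on the boundary sphere. -/
def IsBiLapNeumannEigenvalueBall (n : ℕ) (R Υ : ℝ) : Prop :=
  ∃ u : EuclideanSpace ℝ (Fin n) → ℝ,
    ContDiffOn ℝ (⊤ : ℕ∞) u (closedBall 0 R) ∧
    (∃ x ∈ closedBall (0 : EuclideanSpace ℝ (Fin n)) R, u x ≠ 0) ∧
    (∀ x ∈ ball (0 : EuclideanSpace ℝ (Fin n)) R,
      lapWithin (closedBall 0 R) (lapWithin (closedBall 0 R) u) x = Υ * u x) ∧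
    (∀ x : EuclideanSpace ℝ (Fin n), ‖x‖ = R →
      fderivWithin ℝ u (closedBall 0 R) x (‖x‖⁻¹ • x) = 0) ∧
    (∀ x : EuclideanSpace ℝ (Fin n), ‖x‖ = R →
      fderivWithin ℝ (lapWithin (closedBall 0 R) u) (closedBall 0 R) x (‖x‖⁻¹ • x) = 0)

/-- `Υ` is a Neumann eigenvalue of the even-multi-Laplacian `Δ^(2m)` on the ball `B_R(0) ⊂ ℝⁿ`:
there is a nonzero function `u`, smooth on the closed ball, with `Δ^(2m)u = Υ·u` in the open ball
and `∂(Δʲu)/∂n = 0` on the boundary sphere for every `j = 0, 1, …, 2m−1`. -/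
def IsPolyLapNeumannEigenvalueBall (n m : ℕ) (R Υ : ℝ) : Prop :=
  ∃ u : EuclideanSpace ℝ (Fin n) → ℝ,
    ContDiffOn ℝ (⊤ : ℕ∞) u (closedBall 0 R) ∧
    (∃ x ∈ closedBall (0 : EuclideanSpace ℝ (Fin n)) R, u x ≠ 0) ∧
    (∀ x ∈ ball (0 : EuclideanSpace ℝ (Fin n)) R,
      (lapWithin (closedBall 0 R))^[2 * m] u x = Υ * u x) ∧
    (∀ j < 2 * m, ∀ x : EuclideanSpace ℝ (Fin n), ‖x‖ = R →
      fderivWithin ℝ ((lapWithin (closedBall 0 R))^[j] u) (closedBall 0 R) x (‖x‖⁻¹ • x) = 0)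

open Filter Topology

abbrev EE (n : ℕ) := EuclideanSpace ℝ (Fin n)

lemma smoothTransition_deriv_bound : ∃ C : ℝ, 0 ≤ C ∧ ∀ t, |deriv Real.smoothTransition t| ≤ C := by
  have hc : Continuous (deriv Real.smoothTransition) :=
    (Real.smoothTransition.contDiff (n := 1)).continuous_deriv (by norm_num)
  obtain ⟨C, hC⟩ := (isCompact_Icc (a := (0:ℝ)) (b := 1)).exists_bound_of_continuousOn hc.continuousOn
  refine ⟨max C 0, le_max_right _ _, fun t => ?_⟩
  by_cases ht : t ∈ Icc (0:ℝ) 1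
  · exact (hC t ht).trans (le_max_left _ _)
  · have : deriv Real.smoothTransition t = 0 := by
      rw [mem_Icc, not_and_or, not_le, not_le] at ht
      rcases ht with ht | ht
      · have : Real.smoothTransition =ᶠ[𝓝 t] fun _ => 0 := by
          filter_upwards [Iio_mem_nhds ht] with y hy
          exact Real.smoothTransition.zero_of_nonpos (le_of_lt hy)
        rw [this.deriv_eq]; simp
      · have : Real.smoothTransition =ᶠ[𝓝 t] fun _ => 1 := by
          filter_upwards [Ioi_mem_nhds ht] with y hy
          exact Real.smoothTransition.one_of_one_le (le_of_lt hy)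
        rw [this.deriv_eq]; simp
    rw [this]; simp

/-- cutoff -/
def cutoff {n : ℕ} (R ε : ℝ) (x : EE n) : ℝ :=
  Real.smoothTransition ((R ^ 2 - ‖x‖ ^ 2) / ε - 1)

lemma cutoff_continuous {n : ℕ} (R ε : ℝ) : Continuous (cutoff (n := n) R ε) := by
  unfold cutoff
  exact Real.smoothTransition.continuous.comp (by fun_prop)

lemma cutoff_lineDeriv {n : ℕ} (R ε : ℝ) (x : EE n) (i : Fin n) :
    HasLineDerivAt ℝ (cutoff R ε) (deriv Real.smoothTransition ((R ^ 2 - ‖x‖ ^ 2) / ε - 1)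
      * (-2 * x i / ε)) x (EuclideanSpace.single i 1) := by
  have h1 : HasFDerivAt (fun y : EE n => (R ^ 2 - ‖y‖ ^ 2) / ε - 1)
      ((ε⁻¹) • (-((2:ℝ) • (innerSL ℝ x : EE n →L[ℝ] ℝ)))) x := by
    have := (((hasStrictFDerivAt_norm_sq x).hasFDerivAt.const_sub (R^2)).mul_const ε⁻¹).sub_const 1
    simpa [div_eq_mul_inv, two_smul] using this
  have h2 := (Real.smoothTransition.contDiff (n := 1)).differentiable (by norm_num)
    ((R ^ 2 - ‖x‖ ^ 2) / ε - 1)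
  have h3 := (h2.hasDerivAt.comp_hasFDerivAt x h1).hasLineDerivAt (EuclideanSpace.single i 1)
  have hv : ((deriv Real.smoothTransition ((R ^ 2 - ‖x‖ ^ 2) / ε - 1) •
      ε⁻¹ • -((2:ℝ) • (innerSL ℝ x : EE n →L[ℝ] ℝ))) (EuclideanSpace.single i 1)) =
      deriv Real.smoothTransition ((R ^ 2 - ‖x‖ ^ 2) / ε - 1) * (-2 * x i / ε) := by
    simp [EuclideanSpace.inner_single_right]
    ring
  rw [hv] at h3
  exact h3

lemma cutoff_tsupport {n : ℕ} {R ε : ℝ} (hε : 0 < ε) :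
    tsupport (cutoff (n := n) R ε) ⊆ {x | ‖x‖ ^ 2 ≤ R ^ 2 - ε} := by
  apply closure_minimal
  · intro x hx
    by_contra h
    apply hx
    simp only [mem_ofPred_eq, not_le] at h
    apply Real.smoothTransition.zero_of_nonpos
    rw [sub_nonpos, div_le_one hε]; linarith
  · exact isClosed_le (by fun_prop) (by fun_prop)

lemma cutoff_integrable {n : ℕ} {R ε : ℝ} (hR : 0 < R) (hε : 0 < ε) {h k : EE n → ℝ}
    (hk : Continuous k) (hks : Function.support k ⊆ {x | ‖x‖ ^ 2 ≤ R ^ 2 - ε})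
    (hh : ContinuousOn h (ball 0 R)) :
    Integrable (fun x => k x * h x) := by
  have hsub : {x : EE n | ‖x‖ ^ 2 ≤ R ^ 2 - ε} ⊆ ball 0 R := by
    intro x hx
    simp only [mem_ofPred_eq] at hx
    rw [mem_ball_zero_iff]
    by_contra hcon
    push Not at hcon
    nlinarith [norm_nonneg x]
  have hcomp : IsCompact {x : EE n | ‖x‖ ^ 2 ≤ R ^ 2 - ε} := by
    apply (isCompact_closedBall (0 : EE n) R).of_isClosed_subset
    · exact isClosed_le (by fun_prop) (by fun_prop)
    · exact hsub.trans ball_subset_closedBall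
  rw [← integrableOn_iff_integrable_of_support_subset (s := {x : EE n | ‖x‖ ^ 2 ≤ R ^ 2 - ε})]
  · exact (hk.continuousOn.mul (hh.mono hsub)).integrableOn_compact hcomp
  · intro x hx
    apply hks
    intro h0
    apply hx
    simp [h0]

theorem div_ball_zero {n : ℕ} {R : ℝ} (hR : 0 < R) (F D : Fin n → EE n → ℝ) (M : ℝ)
    (hF : ∀ i, ∀ x ∈ ball (0 : EE n) R,
      HasLineDerivAt ℝ (F i) (D i x) x (EuclideanSpace.single i 1))
    (hFc : ∀ i, ContinuousOn (F i) (ball 0 R))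
    (hDc : ∀ i, ContinuousOn (D i) (ball 0 R))
    (hbd : ∀ x ∈ ball (0 : EE n) R, |∑ i, F i x * x i| ≤ M * (R - ‖x‖))
    (hInteg : IntegrableOn (fun x => ∑ i, D i x) (ball 0 R)) :
    ∫ x in ball (0 : EE n) R, ∑ i, D i x = 0 := by
  obtain ⟨C, hC0, hC⟩ := smoothTransition_deriv_bound
  set ψ' := deriv Real.smoothTransition with hψ'
  have hψc : Continuous ψ' :=
    (Real.smoothTransition.contDiff (n := 1)).continuous_deriv (by norm_num)
  have hψ0 : ∀ t ≤ 0, ψ' t = 0 := by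
    intro t ht
    have h0 : ∀ t < 0, ψ' t = 0 := by
      intro t ht
      have : Real.smoothTransition =ᶠ[𝓝 t] fun _ => 0 := by
          filter_upwards [Iio_mem_nhds ht] with y hy
          exact Real.smoothTransition.zero_of_nonpos (le_of_lt hy)
      rw [hψ', this.deriv_eq]; simp
    have hcl : closure (Iio (0:ℝ)) ⊆ {t | ψ' t = 0} :=
      closure_minimal (fun t ht => h0 t ht) (isClosed_eq hψc continuous_const)
    rw [closure_Iio] at hcl
    exact hcl ht
  have hψ1 : ∀ t > 1, ψ' t = 0 := by
    intro t ht
    have : Real.smoothTransition =ᶠ[𝓝 t] fun _ => 1 := by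
          filter_upwards [Ioi_mem_nhds ht] with y hy
          exact Real.smoothTransition.one_of_one_le (le_of_lt hy)
    rw [hψ', this.deriv_eq]; simp
  have hsupp' : ∀ ε > 0, Function.support (fun x : EE n => ψ' ((R ^ 2 - ‖x‖ ^ 2) / ε - 1)) ⊆
      {x | ‖x‖ ^ 2 ≤ R ^ 2 - ε} := by
    intro ε hε x hx
    by_contra h
    apply hx
    simp only [mem_ofPred_eq, not_le] at h
    apply hψ0
    rw [sub_nonpos, div_le_one hε]; linarith
  -- integration by parts for each ε
  have key : ∀ ε > 0, ∫ x in ball (0 : EE n) R, cutoff R ε x * ∑ i, D i x =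
      ∫ x in ball (0 : EE n) R, ψ' ((R ^ 2 - ‖x‖ ^ 2) / ε - 1) * (2 / ε) * ∑ i, F i x * x i := by
    intro ε hε
    have hsub : {x : EE n | ‖x‖ ^ 2 ≤ R ^ 2 - ε} ⊆ ball 0 R := by
      intro x hx
      simp only [mem_ofPred_eq] at hx
      rw [mem_ball_zero_iff]
      by_contra hcon
      push Not at hcon
      nlinarith [norm_nonneg x]
    have i1 : ∀ i, Integrable (fun x => cutoff R ε x * D i x) := fun i =>
      cutoff_integrable hR hε (cutoff_continuous R ε)
        ((subset_tsupport _).trans (cutoff_tsupport hε)) (hDc i)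
    have i2 : ∀ i, Integrable (fun x => cutoff R ε x * F i x) := fun i =>
      cutoff_integrable hR hε (cutoff_continuous R ε)
        ((subset_tsupport _).trans (cutoff_tsupport hε)) (hFc i)
    have i3 : ∀ i, Integrable (fun x : EE n => ψ' ((R ^ 2 - ‖x‖ ^ 2) / ε - 1)
      * ((-2 * x i / ε) * F i x)) := fun i => by
      apply cutoff_integrable hR hε _ (hsupp' ε hε)
      · exact ContinuousOn.mul (by fun_prop) (hFc i)
      · exact hψc.comp (by fun_prop)
    have i3' : ∀ i, Integrable (fun x : EE n => (ψ' ((R ^ 2 - ‖x‖ ^ 2) / ε - 1)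
      * (-2 * x i / ε)) * F i x) := fun i => by
      refine (i3 i).congr (Eventually.of_forall fun x => ?_)
      simp only; ring
    have ibp : ∀ i, ∫ x, cutoff R ε x * D i x = - ∫ x : EE n, (ψ' ((R ^ 2 - ‖x‖ ^ 2) / ε - 1)
      * (-2 * x i / ε)) * F i x := by
      intro i
      have := integral_bilinear_hasLineDerivAt_right_eq_neg_left_of_integrable
        (μ := (volume : Measure (EE n))) (B := ContinuousLinearMap.mul ℝ ℝ)
        (f := cutoff R ε) (g := F i) (g' := D i) (v := EuclideanSpace.single i 1)
        (f' := fun x => ψ' ((R ^ 2 - ‖x‖ ^ 2) / ε - 1) * (-2 * x i / ε))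
        (by simpa using i3' i) (by simpa using i1 i) (by simpa using i2 i)
        (fun x _ => cutoff_lineDeriv R ε x i)
        (fun x hx => hF i x (hsub (cutoff_tsupport hε hx)))
      simpa using this
    have e1 : ∫ x in ball (0 : EE n) R, cutoff R ε x * ∑ i, D i x
        = ∑ i, ∫ x, cutoff R ε x * D i x := by
      rw [← integral_finsetSum _ (fun i _ => i1 i)]
      simp_rw [Finset.mul_sum]
      apply setIntegral_eq_integral_of_forall_compl_eq_zero
      intro x hx
      have : cutoff R ε x = 0 := by
        by_contra h
        exact hx (hsub (cutoff_tsupport hε (subset_tsupport _ h)))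
      simp [this]
    have e2 : ∫ x in ball (0 : EE n) R, ψ' ((R ^ 2 - ‖x‖ ^ 2) / ε - 1) * (2 / ε) * ∑ i, F i x * x i
        = ∑ i, - ∫ x : EE n, (ψ' ((R ^ 2 - ‖x‖ ^ 2) / ε - 1)
      * (-2 * x i / ε)) * F i x := by
      simp_rw [← integral_neg]
      rw [← integral_finsetSum _ (fun i _ => (i3' i).fun_neg)]
      refine Eq.trans ?_ (setIntegral_eq_integral_of_forall_compl_eq_zero
        (s := ball (0 : EE n) R) ?_)
      · congr 1
        ext x
        rw [Finset.mul_sum]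
        apply Finset.sum_congr rfl
        intro i _
        ring
      · intro x hx
        have : ψ' ((R ^ 2 - ‖x‖ ^ 2) / ε - 1) = 0 := by
          by_contra h
          exact hx (hsub (hsupp' ε hε h))
        simp [this]
    rw [e1, e2]
    exact Finset.sum_congr rfl fun i _ => ibp i
  set eps : ℕ → ℝ := fun k => 1 / ((k : ℝ) + 1) with heps
  have epos : ∀ k, 0 < eps k := fun k => by positivity
  have e0 : Tendsto eps atTop (𝓝 0) := tendsto_one_div_add_atTop_nhds_zero_nat
  have hev : ∀ x ∈ ball (0 : EE n) R, ∀ᶠ k in atTop, 2 < (R ^ 2 - ‖x‖ ^ 2) / eps k := by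
    intro x hx
    rw [mem_ball_zero_iff] at hx
    have hp : 0 < (R ^ 2 - ‖x‖ ^ 2) / 2 := by nlinarith [norm_nonneg x]
    filter_upwards [e0.eventually (gt_mem_nhds hp)] with k hk
    rw [lt_div_iff₀ (epos k)]
    linarith
  have hM : ∀ x ∈ ball (0 : EE n) R, 0 ≤ M * (R - ‖x‖) := fun x hx => (abs_nonneg _).trans (hbd x hx)
  have lim1 : Tendsto (fun k => ∫ x in ball (0 : EE n) R, cutoff R (eps k) x * ∑ i, D i x) atTop
      (𝓝 (∫ x in ball (0 : EE n) R, ∑ i, D i x)) := by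
    apply tendsto_integral_of_dominated_convergence (fun x => ‖∑ i, D i x‖)
    · intro k
      exact (cutoff_continuous R _).aestronglyMeasurable.mul hInteg.aestronglyMeasurable
    · exact hInteg.norm
    · intro k
      refine Eventually.of_forall fun x => ?_
      rw [norm_mul]
      apply mul_le_of_le_one_left (norm_nonneg _)
      rw [cutoff, Real.norm_eq_abs, abs_of_nonneg (Real.smoothTransition.nonneg _)]
      exact Real.smoothTransition.le_one _
    · filter_upwards [ae_restrict_mem measurableSet_ball] with x hx
      apply tendsto_const_nhds.congr'
      filter_upwards [hev x hx] with k hk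
      rw [cutoff, Real.smoothTransition.one_of_one_le (by linarith), one_mul]
  have lim2 : Tendsto (fun k => ∫ x in ball (0 : EE n) R,
      ψ' ((R ^ 2 - ‖x‖ ^ 2) / eps k - 1) * (2 / eps k) * ∑ i, F i x * x i) atTop
      (𝓝 (∫ x in ball (0 : EE n) R, 0)) := by
    apply tendsto_integral_of_dominated_convergence (fun x => C * (4 / R) * |M|)
    · intro k
      apply AEStronglyMeasurable.mul
      · exact ((hψc.comp (by fun_prop)).mul continuous_const).aestronglyMeasurable
      · apply ContinuousOn.aestronglyMeasurable _ measurableSet_ball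
        exact continuousOn_finsetSum _ fun i _ => (hFc i).mul (by fun_prop)
    · exact integrableOn_const measure_ball_lt_top.ne
    · intro k
      filter_upwards [ae_restrict_mem measurableSet_ball] with x hx
      have hx' := mem_ball_zero_iff.1 hx
      rw [norm_mul, norm_mul, Real.norm_eq_abs, Real.norm_eq_abs, Real.norm_eq_abs]
      by_cases hlt : 1 < (R ^ 2 - ‖x‖ ^ 2) / eps k - 1
      · rw [hψ1 _ hlt]; simp; positivity
      · have h2 : (R ^ 2 - ‖x‖ ^ 2) / eps k ≤ 2 := by linarith
        rw [div_le_iff₀ (epos k)] at h2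
        have h3 : R * (R - ‖x‖) ≤ 2 * eps k := by nlinarith [norm_nonneg x]
        have h4 : |∑ i, F i x * x i| ≤ |M| * (2 * eps k / R) := by
          refine (hbd x hx).trans ?_
          have : R - ‖x‖ ≤ 2 * eps k / R := by rw [le_div_iff₀ hR]; linarith
          exact mul_le_mul (le_abs_self M) this (by linarith) (abs_nonneg _)
        calc _ ≤ C * |2 / eps k| * (|M| * (2 * eps k / R)) := by gcongr; exact hC _
          _ = _ := by
            rw [abs_of_pos (by have := epos k; positivity)]
            have := (epos k).ne'
            field_simp; ring
    · filter_upwards [ae_restrict_mem measurableSet_ball] with x hx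
      apply tendsto_const_nhds.congr'
      filter_upwards [hev x hx] with k hk
      rw [hψ1 _ (by linarith)]; simp
  have : (fun k => ∫ x in ball (0 : EE n) R, cutoff R (eps k) x * ∑ i, D i x) = (fun k => ∫ x in ball (0 : EE n) R,
      ψ' ((R ^ 2 - ‖x‖ ^ 2) / eps k - 1) * (2 / eps k) * ∑ i, F i x * x i) := by
    ext k; exact key _ (epos k)
  rw [this] at lim1
  rw [tendsto_nhds_unique lim1 lim2]; simp

/-- `v` is `C¹` on the open ball with gradient `V`, both continuous up to the boundary. -/
structure C1B {n : ℕ} (R : ℝ) (v : EE n → ℝ) (V : EE n → EE n) : Prop where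
  cv : ContinuousOn v (closedBall 0 R)
  cV : ContinuousOn V (closedBall 0 R)
  d : ∀ x ∈ ball (0 : EE n) R, HasFDerivAt v (innerSL ℝ (V x)) x

theorem div_mul_zero {n : ℕ} {R : ℝ} (hR : 0 < R) (q : EE n → ℝ) (W Φ : EE n → EE n)
    (D : Fin n → EE n → ℝ) (Dt : EE n → ℝ) (M : ℝ)
    (hq : ∀ x ∈ ball (0 : EE n) R, HasFDerivAt q (innerSL ℝ (W x)) x)
    (hW : ContinuousOn W (ball 0 R))
    (hΦ : ∀ i, ∀ x ∈ ball (0 : EE n) R,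
      HasLineDerivAt ℝ (fun y => Φ y i) (D i x) x (EuclideanSpace.single i 1))
    (hΦc : ContinuousOn Φ (ball 0 R))
    (hDc : ∀ i, ContinuousOn (D i) (ball 0 R))
    (hDt : ∀ x ∈ ball (0 : EE n) R, ∑ i, D i x = Dt x)
    (hbd : ∀ x ∈ ball (0 : EE n) R, |q x * inner ℝ (Φ x) x| ≤ M * (R - ‖x‖))
    (hInteg : IntegrableOn (fun x => q x * Dt x + inner ℝ (W x) (Φ x)) (ball 0 R)) :
    ∫ x in ball (0 : EE n) R, (q x * Dt x + inner ℝ (W x) (Φ x)) = 0 := by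
  have hqc : ContinuousOn q (ball 0 R) := fun x hx => (hq x hx).continuousAt.continuousWithinAt
  have hΦi : ∀ i, ContinuousOn (fun x => Φ x i) (ball 0 R) := fun i =>
    (EuclideanSpace.proj (𝕜 := ℝ) i).continuous.comp_continuousOn hΦc
  have hWi : ∀ i, ContinuousOn (fun x => W x i) (ball 0 R) := fun i =>
    (EuclideanSpace.proj (𝕜 := ℝ) i).continuous.comp_continuousOn hW
  have hsum : ∀ x ∈ ball (0 : EE n) R, ∑ i, (q x * D i x + W x i * Φ x i) =
      q x * Dt x + inner ℝ (W x) (Φ x) := by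
    intro x hx
    rw [Finset.sum_add_distrib, ← Finset.mul_sum, hDt x hx]
    congr 1
    rw [PiLp.inner_apply]
    apply Finset.sum_congr rfl
    intro i _
    simp [mul_comm]
  have := div_ball_zero hR (fun i x => q x * Φ x i) (fun i x => q x * D i x + W x i * Φ x i) M
    (fun i x hx => by
      have h1 := (hq x hx).hasLineDerivAt (EuclideanSpace.single i 1)
      have h2 := hΦ i x hx
      have h3 : HasDerivAt (fun t : ℝ => q (x + t • EuclideanSpace.single i (1:ℝ)) *
        Φ (x + t • EuclideanSpace.single i (1:ℝ)) i) _ 0 := HasDerivAt.mul h1 h2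
      simp only [zero_smul, add_zero] at h3
      have e : (innerSL ℝ (W x)) (EuclideanSpace.single i (1:ℝ)) * Φ x i + q x * D i x =
        q x * D i x + W x i * Φ x i := by
        simp [EuclideanSpace.inner_single_right]; ring
      rw [e] at h3
      exact h3)
    (fun i => hqc.mul (hΦi i))
    (fun i => (hqc.mul (hDc i)).add ((hWi i).mul (hΦi i)))
    (fun x hx => by
      have : ∑ i, q x * Φ x i * x i = q x * inner ℝ (Φ x) x := by
        rw [PiLp.inner_apply, Finset.mul_sum]
        apply Finset.sum_congr rfl
        intro i _
        simp; ring
      rw [this]; exact hbd x hx)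
    (hInteg.congr_fun (fun x hx => (hsum x hx).symm) measurableSet_ball)
  rw [← this]
  exact setIntegral_congr_fun measurableSet_ball (fun x hx => (hsum x hx).symm)

lemma closure_lip {n : ℕ} {R : ℝ} (hR : 0 < R) {F : Type*} [NormedAddCommGroup F] {h : EE n → F}
    (hc : ContinuousOn h (closedBall 0 R)) {L : ℝ}
    (hL : ∀ x ∈ ball (0 : EE n) R, ∀ y ∈ ball (0 : EE n) R, ‖h x - h y‖ ≤ L * ‖x - y‖) :
    ∀ x ∈ closedBall (0 : EE n) R, ∀ y ∈ closedBall (0 : EE n) R, ‖h x - h y‖ ≤ L * ‖x - y‖ := by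
  have hball : ∀ z ∈ closedBall (0 : EE n) R, ∀ t ∈ Ico (0:ℝ) 1, t • z ∈ ball (0 : EE n) R := by
    intro z hz t ht
    rw [mem_closedBall_zero_iff] at hz
    rw [mem_ball_zero_iff, norm_smul, Real.norm_eq_abs, abs_of_nonneg ht.1]
    nlinarith [norm_nonneg z, ht.1, ht.2]
  have hlim : ∀ z ∈ closedBall (0 : EE n) R,
      Tendsto (fun t : ℝ => h (t • z)) (𝓝[Ico 0 1] 1) (𝓝 (h z)) := by
    intro z hz
    have h1 : ContinuousWithinAt h (closedBall 0 R) z := hc z hz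
    apply h1.tendsto.comp
    apply tendsto_nhdsWithin_of_tendsto_nhds_of_eventually_within
    · have : Tendsto (fun t : ℝ => t • z) (𝓝 1) (𝓝 ((1:ℝ) • z)) :=
        Continuous.tendsto (by fun_prop) 1
      rw [one_smul] at this
      exact this.mono_left nhdsWithin_le_nhds
    · filter_upwards [self_mem_nhdsWithin] with t ht
      exact ball_subset_closedBall (hball z hz t ht)
  intro x hx y hy
  have : (𝓝[Ico (0:ℝ) 1] 1).NeBot := by
    rw [← mem_closure_iff_nhdsWithin_neBot, closure_Ico (by norm_num)]
    simp
  have l1 := ((hlim x hx).sub (hlim y hy)).norm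
  have l2 : Tendsto (fun t : ℝ => L * ‖t • x - t • y‖) (𝓝[Ico 0 1] 1) (𝓝 (L * ‖x - y‖)) := by
    have : Tendsto (fun t : ℝ => L * ‖t • x - t • y‖) (𝓝 1) (𝓝 (L * ‖(1:ℝ) • x - (1:ℝ) • y‖)) :=
      Continuous.tendsto (by fun_prop) 1
    simp only [one_smul] at this
    exact this.mono_left nhdsWithin_le_nhds
  refine le_of_tendsto_of_tendsto l1 l2 ?_
  filter_upwards [self_mem_nhdsWithin] with t ht
  exact hL _ (hball x hx t ht) _ (hball y hy t ht)

lemma C1B.lip {n : ℕ} {R : ℝ} (hR : 0 < R) {v : EE n → ℝ} {V : EE n → EE n} (h : C1B R v V) :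
    ∃ L : ℝ, 0 ≤ L ∧ ∀ x ∈ closedBall (0 : EE n) R, ∀ y ∈ closedBall (0 : EE n) R,
      |v x - v y| ≤ L * ‖x - y‖ := by
  obtain ⟨C, hC⟩ := (isCompact_closedBall (0 : EE n) R).exists_bound_of_continuousOn h.cV
  refine ⟨max C 0, le_max_right _ _, ?_⟩
  apply closure_lip hR h.cv
  intro x hx y hy
  refine (convex_ball (0 : EE n) R).norm_image_sub_le_of_norm_hasFDerivWithin_le
    (f' := fun x => innerSL ℝ (V x))
    (fun z hz => (h.d z hz).hasFDerivWithinAt) (fun z hz => ?_) hy hx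
  rw [innerSL_apply_norm]
  exact (hC z (ball_subset_closedBall hz)).trans (le_max_left _ _)

lemma exists_bdry {n : ℕ} (hn : 1 ≤ n) {R : ℝ} (hR : 0 < R) (x : EE n) (hx : ‖x‖ ≤ R) :
    ∃ y : EE n, ‖y‖ = R ∧ ‖x - y‖ = R - ‖x‖ := by
  by_cases h0 : x = 0
  · refine ⟨EuclideanSpace.single ⟨0, hn⟩ R, ?_, ?_⟩ <;> simp [h0, abs_of_pos hR]
  · have hp : 0 < ‖x‖ := norm_pos_iff.2 h0
    refine ⟨(R / ‖x‖) • x, ?_, ?_⟩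
    · rw [norm_smul, Real.norm_eq_abs, abs_of_pos (by positivity)]; field_simp
    · have : x - (R / ‖x‖) • x = (1 - R / ‖x‖) • x := by rw [sub_smul, one_smul]
      rw [this, norm_smul, Real.norm_eq_abs, abs_of_nonpos]
      · field_simp; ring
      · rw [sub_nonpos, le_div_iff₀ hp]; linarith

lemma bdry_bound {n : ℕ} (hn : 1 ≤ n) {R : ℝ} (hR : 0 < R) {h : EE n → ℝ} {L : ℝ}
    (hL : ∀ x ∈ closedBall (0 : EE n) R, ∀ y ∈ closedBall (0 : EE n) R,
      |h x - h y| ≤ L * ‖x - y‖) (h0 : ∀ x, ‖x‖ = R → h x = 0) :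
    ∀ x ∈ ball (0 : EE n) R, |h x| ≤ L * (R - ‖x‖) := by
  intro x hx
  rw [mem_ball_zero_iff] at hx
  obtain ⟨y, hy, hxy⟩ := exists_bdry hn hR x hx.le
  have := hL x (by simpa using hx.le) y (by simpa using hy.le)
  rwa [h0 y hy, sub_zero, hxy] at this

lemma contDiffOn_lip {n : ℕ} {R : ℝ} (hR : 0 < R) {F : Type*} [NormedAddCommGroup F]
    [NormedSpace ℝ F] {h : EE n → F}
    (hc : ContDiffOn ℝ 1 h (closedBall 0 R)) :
    ∃ L : ℝ, 0 ≤ L ∧ ∀ x ∈ closedBall (0 : EE n) R, ∀ y ∈ closedBall (0 : EE n) R,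
      ‖h x - h y‖ ≤ L * ‖x - y‖ := by
  have hud : UniqueDiffOn ℝ (closedBall (0 : EE n) R) :=
    uniqueDiffOn_convex (convex_closedBall _ _) (by
      rw [interior_closedBall _ hR.ne']; exact ⟨0, mem_ball_self hR⟩)
  have hcont := hc.continuousOn_fderivWithin hud (by norm_num)
  obtain ⟨C, hC⟩ := (isCompact_closedBall (0 : EE n) R).exists_bound_of_continuousOn hcont
  refine ⟨max C 0, le_max_right _ _, fun x hx y hy => ?_⟩
  exact (convex_closedBall (0 : EE n) R).norm_image_sub_le_of_norm_fderivWithin_le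
    (hc.differentiableOn (by norm_num)) (fun z hz => (hC z hz).trans (le_max_left _ _)) hy hx

lemma ContinuousOn.intBall {n : ℕ} {R : ℝ} {F : Type*} [NormedAddCommGroup F] {h : EE n → F}
    (hc : ContinuousOn h (closedBall 0 R)) : IntegrableOn h (ball 0 R) :=
  (hc.integrableOn_compact (isCompact_closedBall _ _)).mono_set ball_subset_closedBall

/-- radial divergence -/
lemma div_radial {n : ℕ} (hn : 1 ≤ n) {R : ℝ} (hR : 0 < R) {q : EE n → ℝ} {W : EE n → EE n}
    (hq : C1B R q W) (h0 : ∀ x, ‖x‖ = R → q x = 0) :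
    ∫ x in ball (0 : EE n) R, (q x * n + inner ℝ (W x) x) = 0 := by
  obtain ⟨L, hL0, hL⟩ := hq.lip hR
  have hb := bdry_bound hn hR hL h0
  apply div_mul_zero hR q W (fun x => x) (fun i x => 1) (fun _ => n) (L * R ^ 2) hq.d
    (hq.cV.mono ball_subset_closedBall)
  · intro i x hx
    have := (EuclideanSpace.proj (𝕜 := ℝ) i : EE n →L[ℝ] ℝ).hasFDerivAt (x := x)
      |>.hasLineDerivAt (EuclideanSpace.single i 1)
    simpa using this
  · exact continuousOn_id
  · intro i; exact continuousOn_const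
  · intro x hx; simp
  · intro x hx
    have h1 := hb x hx
    rw [mem_ball_zero_iff] at hx
    rw [abs_mul, real_inner_self_eq_norm_sq, abs_of_nonneg (sq_nonneg ‖x‖)]
    calc |q x| * ‖x‖ ^ 2 ≤ (L * (R - ‖x‖)) * R ^ 2 := by
          apply mul_le_mul h1 _ (by positivity) ((abs_nonneg _).trans h1)
          gcongr
      _ = _ := by ring
  · apply ContinuousOn.intBall
    exact (hq.cv.mul continuousOn_const).add (hq.cV.inner continuousOn_id)

/-- power series sum -/
def ps (a : ℕ → ℝ) (t : ℝ) : ℝ := ∑' k, a k * t ^ k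

/-- coefficients of the derivative -/
def psD (a : ℕ → ℝ) (k : ℕ) : ℝ := ((k : ℝ) + 1) * a (k + 1)

/-- exponential-type coefficient bound -/
def PsB (a : ℕ → ℝ) : Prop := ∀ k, |a k| ≤ 1 / (k.factorial : ℝ)

lemma PsB.D {a : ℕ → ℝ} (h : PsB a) : PsB (psD a) := by
  intro k
  have := h (k + 1)
  rw [psD, abs_mul, abs_of_nonneg (by positivity : (0:ℝ) ≤ (k:ℝ) + 1)]
  calc ((k:ℝ) + 1) * |a (k + 1)| ≤ ((k:ℝ) + 1) * (1 / ((k + 1).factorial : ℝ)) := by gcongr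
    _ = _ := by
      rw [Nat.factorial_succ]; push_cast
      have : (k.factorial : ℝ) ≠ 0 := by positivity
      field_simp

lemma PsB.summable {a : ℕ → ℝ} (h : PsB a) (t : ℝ) : Summable (fun k => a k * t ^ k) := by
  refine Summable.of_norm_bounded (g := fun k => |t| ^ k / (k.factorial : ℝ))
    (Real.summable_pow_div_factorial _) fun k => ?_
  rw [norm_mul, norm_pow, Real.norm_eq_abs, Real.norm_eq_abs, div_eq_inv_mul, ← one_div]
  gcongr
  exact h k

lemma PsB.hasDerivAt {a : ℕ → ℝ} (h : PsB a) (t : ℝ) : HasDerivAt (ps a) (ps (psD a) t) t := by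
  set r := |t| + 1
  have hu : Summable (fun k : ℕ => |a k| * (k * r ^ (k - 1))) := by
    rw [← summable_nat_add_iff 1]
    refine Summable.of_nonneg_of_le (fun k => by positivity) (fun k => ?_)
      (Real.summable_pow_div_factorial r)
    have := h.D k
    rw [psD, abs_mul, abs_of_nonneg (by positivity : (0:ℝ) ≤ (k:ℝ) + 1)] at this
    simp only [Nat.add_sub_cancel]
    push_cast
    calc |a (k + 1)| * (((k:ℝ) + 1) * r ^ k) = (((k:ℝ) + 1) * |a (k + 1)|) * r ^ k := by ring
      _ ≤ 1 / (k.factorial : ℝ) * r ^ k := by gcongr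
      _ = _ := by ring
  have := hasDerivAt_tsum_of_isPreconnected (g := fun k z => a k * z ^ k)
    (g' := fun k z => a k * (k * z ^ (k - 1))) (y := t) hu (t := ball (0:ℝ) r) isOpen_ball
    (convex_ball _ _).isPreconnected
    (fun k z _ => (hasDerivAt_pow k z).const_mul (a k)) (fun k z hz => ?_)
    (mem_ball_self (by positivity)) (h.summable 0) (by simp [r])
  · suffices e : ∑' k : ℕ, a k * (k * t ^ (k - 1)) = ps (psD a) t by
      rw [← e]; exact this
    unfold ps
    rw [Summable.tsum_eq_zero_add]
    · simp only [psD, Nat.cast_zero, zero_mul, mul_zero, zero_add, Nat.add_sub_cancel]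
      congr 1; ext k; push_cast; ring
    · refine Summable.of_norm_bounded hu fun k => ?_
      rw [norm_mul, norm_mul, norm_pow, Real.norm_eq_abs, Real.norm_eq_abs, Real.norm_eq_abs,
        Nat.abs_cast]
      gcongr
      simp [r]
  · rw [norm_mul, norm_mul, norm_pow, Real.norm_eq_abs, Real.norm_eq_abs, Nat.abs_cast]
    rw [mem_ball_zero_iff] at hz
    gcongr

lemma PsB.contDiff {a : ℕ → ℝ} (h : PsB a) : ContDiff ℝ (⊤ : ℕ∞) (ps a) := by
  rw [contDiff_infty]
  intro m
  induction m generalizing a with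
  | zero => exact contDiff_zero.2 (continuous_iff_continuousAt.2 fun t => (h.hasDerivAt t).continuousAt)
  | succ m ih =>
    have : deriv (ps a) = ps (psD a) := funext fun t => (h.hasDerivAt t).deriv
    push_cast
    rw [contDiff_succ_iff_deriv, this]
    exact ⟨fun t => (h.hasDerivAt t).differentiableAt, by simp, ih h.D⟩

/-- coefficients of the Bessel-type solution -/
def bc (n : ℕ) : ℕ → ℝ
  | 0 => 1
  | k + 1 => - bc n k / (((k : ℝ) + 1) * (4 * k + 2 * n + 4))

lemma bc_bound (n : ℕ) : PsB (bc n) := by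
  intro k
  induction k with
  | zero => simp [bc]
  | succ k ih =>
    rw [bc, abs_div, abs_neg, abs_of_pos (by positivity : 0 < ((k : ℝ) + 1) * (4 * k + 2 * n + 4)),
      Nat.factorial_succ]
    push_cast
    rw [div_le_div_iff₀ (by positivity) (by positivity)]
    rw [le_div_iff₀ (by positivity)] at ih
    have hk : (0:ℝ) ≤ k := by positivity
    have hn : (0:ℝ) ≤ n := by positivity
    nlinarith

/-- Bessel-type function and its first two derivatives -/
theorem exists_bessel (n : ℕ) : ∃ f f1 f2 : ℝ → ℝ, ContDiff ℝ (⊤ : ℕ∞) f ∧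
    ContDiff ℝ (⊤ : ℕ∞) f1 ∧ ContDiff ℝ (⊤ : ℕ∞) f2 ∧
    (∀ t, HasDerivAt f (f1 t) t) ∧ (∀ t, HasDerivAt f1 (f2 t) t) ∧ f 0 = 1 ∧
    (∀ t, 4 * t * f2 t + (2 * n + 4) * f1 t + f t = 0) := by
  have h := bc_bound n
  refine ⟨ps (bc n), ps (psD (bc n)), ps (psD (psD (bc n))), h.contDiff, h.D.contDiff,
    h.D.D.contDiff, h.hasDerivAt, h.D.hasDerivAt, ?_, ?_⟩
  · unfold ps
    rw [tsum_eq_single 0]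
    · simp [bc]
    · intro k hk; simp [hk]
  · intro t
    have e1 : t * ps (psD (psD (bc n))) t = ∑' k : ℕ, (k : ℝ) * psD (bc n) k * t ^ k := by
      rw [Summable.tsum_eq_zero_add]
      · unfold ps
        rw [← tsum_mul_left]
        simp only [Nat.cast_zero, zero_mul, zero_add]
        congr 1; ext k
        simp only [psD]; push_cast; ring
      · rw [← summable_nat_add_iff 1]
        have := (h.D.D.summable t).mul_left t
        refine this.congr fun k => ?_
        simp only [psD]; push_cast; ring
    have s1 : Summable (fun k : ℕ => (k : ℝ) * psD (bc n) k * t ^ k) := by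
      rw [← summable_nat_add_iff 1]
      have := (h.D.D.summable t).mul_left t
      refine this.congr fun k => ?_
      simp only [psD]; push_cast; ring
    have s2 := h.D.summable t
    have s3 := h.summable t
    have : 4 * t * ps (psD (psD (bc n))) t = 4 * (t * ps (psD (psD (bc n))) t) := by ring
    rw [this, e1]
    unfold ps
    rw [← tsum_mul_left, ← tsum_mul_left, ← (s1.mul_left 4).tsum_add (s2.mul_left _),
      ← ((s1.mul_left 4).add (s2.mul_left _)).tsum_add s3]
    refine Eq.trans (tsum_congr (g := fun _ => (0:ℝ)) fun k => ?_) tsum_zero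
    simp only [psD, bc]
    field_simp
    ring

/-- first zero of the derivative -/
theorem exists_first_zero {n : ℕ} (hn : 1 ≤ n) {f f1 f2 : ℝ → ℝ}
    (h1 : ∀ t, HasDerivAt f (f1 t) t) (h2 : ∀ t, HasDerivAt f1 (f2 t) t) (h0 : f 0 = 1)
    (ode : ∀ t, 4 * t * f2 t + (2 * n + 4) * f1 t + f t = 0) :
    ∃ T > 0, f T + 2 * T * f1 T = 0 ∧ ∀ t ∈ Icc 0 T, 0 < f t := by
  set G : ℝ → ℝ := fun t => f t + 2 * t * f1 t with hG
  have hG' : ∀ t, HasDerivAt G (-(n - 1) * f1 t - f t / 2) t := by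
    intro t
    have := (h1 t).add (((hasDerivAt_id t).const_mul 2).mul (h2 t))
    have e : f1 t + (2 * 1 * f1 t + 2 * id t * f2 t) = -((n:ℝ) - 1) * f1 t - f t / 2 := by
      have := ode t
      simp only [id]
      linarith
    rw [← e]
    exact this
  have hGc : Continuous G := continuous_iff_continuousAt.2 fun t => (hG' t).continuousAt
  have hfc : Continuous f := continuous_iff_continuousAt.2 fun t => (h1 t).continuousAt
  -- positivity of `f` while `G` is positive
  have hpos : ∀ T, (∀ t ∈ Ico 0 T, 0 < G t) → ∀ t ∈ Icc 0 T, 0 < f t := by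
    intro T hT
    -- `t * f t ^ 2` has derivative `f t * G t`
    by_contra hcon
    push Not at hcon
    obtain ⟨t0, ht0, hft0⟩ := hcon
    -- first nonpositive point
    set S := {t | t ∈ Icc 0 t0 ∧ f t ≤ 0} with hS
    have hSc : IsCompact S := by
      have : S = Icc 0 t0 ∩ {t | f t ≤ 0} := rfl
      rw [this]
      exact isCompact_Icc.inter_right (isClosed_le hfc continuous_const)
    obtain ⟨s, hs, hsmin⟩ := hSc.exists_isLeast ⟨t0, ⟨ht0.1, le_rfl⟩, hft0⟩
    have hs0 : 0 < s := by
      rcases hs.1.1.eq_or_lt with h | h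
      · rw [← h, mem_ofPred_eq, h0] at hs; linarith [hs.2]
      · exact h
    have hfp : ∀ t ∈ Ico 0 s, 0 < f t := by
      intro t ht
      by_contra hc
      have := hsmin (a := t) ⟨⟨ht.1, ht.2.le.trans hs.1.2⟩, not_lt.1 hc⟩
      linarith [ht.2]
    have hmono : StrictMonoOn (fun t => t * f t ^ 2) (Icc 0 s) := by
      apply strictMonoOn_of_deriv_pos (convex_Icc _ _) (by fun_prop)
      intro t ht
      rw [interior_Icc] at ht
      have hd : HasDerivAt (fun t => t * f t ^ 2) (f t * G t) t := by
        have := (hasDerivAt_id t).mul ((h1 t).pow 2)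
        have e : 1 * (f t) ^ 2 + id t * ((2:ℕ) * f t ^ (2 - 1) * f1 t) = f t * G t := by
          simp only [hG, id]; push_cast; ring
        rw [← e]
        exact this
      rw [hd.deriv]
      exact mul_pos (hfp t ⟨ht.1.le, ht.2⟩) (hT t ⟨ht.1.le, ht.2.trans_le (hs.1.2.trans ht0.2)⟩)
    have hfs : f s = 0 := by
      apply le_antisymm hs.2
      have : Tendsto f (𝓝[Ico 0 s] s) (𝓝 (f s)) := hfc.continuousAt.tendsto.mono_left nhdsWithin_le_nhds
      have hne : (𝓝[Ico 0 s] s).NeBot := by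
        rw [← mem_closure_iff_nhdsWithin_neBot, closure_Ico hs0.ne]
        exact ⟨hs0.le, le_rfl⟩
      exact ge_of_tendsto this (by
        filter_upwards [self_mem_nhdsWithin] with t ht using (hfp t ht).le)
    have := hmono ⟨le_rfl, hs0.le⟩ ⟨hs0.le, le_rfl⟩ hs0
    simp [hfs] at this
  have hG0 : G 0 = 1 := by simp [hG, h0]
  -- existence of a zero
  have hex : ∃ t ≥ 0, G t ≤ 0 := by
    by_contra hcon
    push Not at hcon
    have hfp : ∀ t ≥ 0, 0 < f t := fun t ht => hpos t (fun s hs => hcon s hs.1) t ⟨ht, le_rfl⟩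
    set t0 : ℝ := 2 * n with ht0
    have hnr : (1:ℝ) ≤ n := by exact_mod_cast hn
    have ht0p : 0 < t0 := by positivity
    have hmono : MonotoneOn (fun t => t * f t ^ 2) (Ici 0) := by
      apply monotoneOn_of_deriv_nonneg (convex_Ici _) (by fun_prop)
      · intro t ht
        exact ((hasDerivAt_id t).mul ((h1 t).pow 2)).differentiableAt.differentiableWithinAt
      intro t ht
      rw [interior_Ici] at ht
      have hd : HasDerivAt (fun t => t * f t ^ 2) (f t * G t) t := by
        have := (hasDerivAt_id t).mul ((h1 t).pow 2)
        have e : 1 * (f t) ^ 2 + id t * ((2:ℕ) * f t ^ (2 - 1) * f1 t) = f t * G t := by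
          simp only [hG, id]; push_cast; ring
        rw [← e]
        exact this
      rw [hd.deriv]
      exact (mul_pos (hfp t (le_of_lt ht)) (hcon t (le_of_lt ht))).le
    set c := √t0 * f t0 with hc
    have hcp : 0 < c := mul_pos (Real.sqrt_pos.2 ht0p) (hfp t0 ht0p.le)
    have hcf : ∀ t ≥ t0, c ≤ √t * f t := by
      intro t ht
      have h := hmono (mem_Ici.2 ht0p.le) (mem_Ici.2 (ht0p.le.trans ht)) ht
      simp only at h
      refine (sq_le_sq₀ hcp.le (mul_nonneg (Real.sqrt_nonneg _) (hfp t (ht0p.le.trans ht)).le)).1 ?_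
      rw [hc, mul_pow, mul_pow, Real.sq_sqrt ht0p.le, Real.sq_sqrt (ht0p.le.trans ht)]
      exact h
    have hanti : AntitoneOn (fun t => G t + c / 2 * √t) (Ici t0) := by
      have hd : ∀ t ∈ Ioi t0, HasDerivAt (fun t => G t + c / 2 * √t)
          (-(n - 1) * f1 t - f t / 2 + c / 2 * (1 / (2 * √t))) t := fun t ht =>
        (hG' t).add ((Real.hasDerivAt_sqrt (ht0p.trans ht).ne').const_mul _)
      apply antitoneOn_of_deriv_nonpos (convex_Ici _)
      · exact (hGc.add (by fun_prop)).continuousOn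
      · intro t ht
        rw [interior_Ici] at ht
        exact (hd t ht).differentiableAt.differentiableWithinAt
      · intro t ht
        rw [interior_Ici] at ht
        rw [(hd t ht).deriv]
        have htp : 0 < t := ht0p.trans ht
        have hf := hfp t htp.le
        have hg := hcon t htp.le
        have hsq : 0 < √t := Real.sqrt_pos.2 htp
        have e1 : c / 2 * (1 / (2 * √t)) ≤ f t / 4 := by
          rw [show c / 2 * (1 / (2 * √t)) = c / (4 * √t) by field_simp; ring,
            div_le_div_iff₀ (by positivity) (by norm_num)]
          nlinarith [hcf t (le_of_lt ht)]
        -- f1 ≥ - f / (2 t)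
        have e2 : -(n - 1) * f1 t ≤ f t / 4 := by
          have h3 : -(f1 t) * t ≤ f t / 2 := by simp only [hG] at hg; linarith
          have h4 : (n:ℝ) - 1 ≤ t / 2 := by
            have : t0 < t := ht
            linarith
          have h5 : -(f1 t) ≤ f t / 2 / t := by rw [le_div_iff₀ htp]; exact h3
          calc -((n:ℝ) - 1) * f1 t = (n - 1) * (-(f1 t)) := by ring
            _ ≤ (n - 1) * (f t / 2 / t) := by
              apply mul_le_mul_of_nonneg_left h5; linarith
            _ ≤ t / 2 * (f t / 2 / t) := by gcongr
            _ = f t / 4 := by field_simp; ring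
        linarith
    -- contradiction at large t
    set A := G t0 + c / 2 * √t0 with hA
    have hbig : ∀ t ≥ t0, c / 2 * √t ≤ A := by
      intro t ht
      have := hanti (mem_Ici.2 le_rfl) (mem_Ici.2 ht) ht
      simp only at this
      linarith [hcon t (ht0p.le.trans ht)]
    have h3 := hbig (max t0 ((2 * A / c + 1) ^ 2)) (le_max_left _ _)
    have hA0 : 0 ≤ A := (by positivity : 0 ≤ c / 2 * √t0).trans (hbig t0 le_rfl)
    have h4 : 2 * A / c + 1 ≤ √(max t0 ((2 * A / c + 1) ^ 2)) :=
      Real.le_sqrt_of_sq_le (le_max_right _ _)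
    have h5 : c / 2 * (2 * A / c + 1) ≤ A := le_trans (by gcongr) h3
    have h6 : c / 2 * (2 * A / c + 1) = A + c / 2 := by field_simp
    linarith
  obtain ⟨t1, ht1, hGt1⟩ := hex
  set S := Icc 0 t1 ∩ {t | G t ≤ 0} with hS
  have hSc : IsCompact S := isCompact_Icc.inter_right (isClosed_le hGc continuous_const)
  obtain ⟨T, hT, hTmin⟩ := hSc.exists_isLeast ⟨t1, ⟨ht1, le_rfl⟩, hGt1⟩
  have hT0 : 0 < T := by
    rcases hT.1.1.eq_or_lt with h | h
    · have := hT.2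
      rw [← h, mem_ofPred_eq, hG0] at this; linarith
    · exact h
  have hGp : ∀ t ∈ Ico 0 T, 0 < G t := by
    intro t ht
    by_contra hc
    have := hTmin (a := t) ⟨⟨ht.1, ht.2.le.trans hT.1.2⟩, not_lt.1 hc⟩
    linarith [ht.2]
  refine ⟨T, hT0, ?_, hpos T hGp⟩
  apply le_antisymm hT.2
  have : Tendsto G (𝓝[Ico 0 T] T) (𝓝 (G T)) := hGc.continuousAt.tendsto.mono_left nhdsWithin_le_nhds
  have hne : (𝓝[Ico 0 T] T).NeBot := by
    rw [← mem_closure_iff_nhdsWithin_neBot, closure_Ico hT0.ne]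
    exact ⟨hT0.le, le_rfl⟩
  exact ge_of_tendsto this (by
    filter_upwards [self_mem_nhdsWithin] with t ht using (hGp t ht).le)

lemma hasFDerivAt_comp_normsq {n : ℕ} {f f1 : ℝ → ℝ} (h1 : ∀ t, HasDerivAt f (f1 t) t) (lam : ℝ)
    (x : EE n) : HasFDerivAt (fun y : EE n => f (lam * ‖y‖ ^ 2))
      ((f1 (lam * ‖x‖ ^ 2) * (2 * lam)) • innerSL ℝ x) x := by
  have hn2 : HasFDerivAt (fun y : EE n => lam * ‖y‖ ^ 2) (lam • (2 • innerSL ℝ x)) x :=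
    (hasStrictFDerivAt_norm_sq x).hasFDerivAt.const_mul lam
  have := (h1 (lam * ‖x‖ ^ 2)).comp_hasFDerivAt x hn2
  have e : f1 (lam * ‖x‖ ^ 2) • (lam • (2 • innerSL ℝ x)) =
      (f1 (lam * ‖x‖ ^ 2) * (2 * lam)) • innerSL ℝ x := by
    ext y; simp; ring
  rw [← e]
  exact this

/-- The first nonradial Neumann eigenfunctions and eigenvalue. -/
theorem exists_eig {n : ℕ} (hn : 1 ≤ n) {R : ℝ} (hR : 0 < R) : ∃ lam : ℝ, 0 < lam ∧ ∀ e : EE n,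
    ∃ (φ : EE n → ℝ) (G : EE n → EE n) (D : Fin n → EE n → ℝ) (c : ℝ),
      ContDiff ℝ (⊤ : ℕ∞) φ ∧ ContDiff ℝ (⊤ : ℕ∞) G ∧ (∀ i, Continuous (D i)) ∧
      (∀ x, HasFDerivAt φ (innerSL ℝ (G x)) x) ∧
      (∀ i x, HasLineDerivAt ℝ (fun y => G y i) (D i x) x (EuclideanSpace.single i 1)) ∧
      (∀ x, ∑ i, D i x = -lam * φ x) ∧
      (∀ x, ‖x‖ = R → inner ℝ (G x) x = 0) ∧ 0 < c ∧
      (∀ x ∈ closedBall (0 : EE n) R, c * |inner ℝ e x| ≤ |φ x|) := by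
  obtain ⟨f, f1, f2, cf, cf1, cf2, h1, h2, h0, ode⟩ := exists_bessel n
  obtain ⟨T, hT, hT0, hpos⟩ := exists_first_zero hn h1 h2 h0 ode
  have hlam : 0 < T / R ^ 2 := by positivity
  refine ⟨T / R ^ 2, hlam, fun e => ?_⟩
  set lam := T / R ^ 2 with hl
  have hlR : lam * R ^ 2 = T := by rw [hl]; field_simp
  obtain ⟨t0, ht0, hmin⟩ := isCompact_Icc.exists_isMinOn (nonempty_Icc.2 hT.le)
    (cf.continuous.continuousOn (s := Icc 0 T))
  have hF := fun x : EE n => hasFDerivAt_comp_normsq h1 lam x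
  have hF1 := fun x : EE n => hasFDerivAt_comp_normsq h2 lam x
  have hI : ∀ x : EE n, HasFDerivAt (fun y : EE n => inner ℝ e y) (innerSL ℝ e) x := fun x =>
    (innerSL ℝ e).hasFDerivAt
  have hP : ∀ i, ∀ x : EE n, HasFDerivAt (fun y : EE n => y i)
      (EuclideanSpace.proj (𝕜 := ℝ) i : EE n →L[ℝ] ℝ) x := fun i x =>
    (EuclideanSpace.proj (𝕜 := ℝ) i : EE n →L[ℝ] ℝ).hasFDerivAt
  have hin : ∀ (y : EE n) i, inner ℝ y (EuclideanSpace.single i (1:ℝ)) = y i := by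
    intro y i; simp [EuclideanSpace.inner_single_right]
  refine ⟨fun x => inner ℝ e x * f (lam * ‖x‖ ^ 2),
    fun x => f (lam * ‖x‖ ^ 2) • e + (2 * lam * f1 (lam * ‖x‖ ^ 2) * inner ℝ e x) • x,
    fun i x => f1 (lam * ‖x‖ ^ 2) * (2 * lam) * x i * e i
      + ((2 * lam * (f2 (lam * ‖x‖ ^ 2) * (2 * lam) * x i)) * inner ℝ e x
        + (2 * lam * f1 (lam * ‖x‖ ^ 2)) * e i) * x i + 2 * lam * f1 (lam * ‖x‖ ^ 2) * inner ℝ e x,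
    f t0, ?_, ?_, ?_, ?_, ?_, ?_, ?_, hpos t0 ht0, ?_⟩
  · have : ContDiff ℝ (⊤ : ℕ∞) (fun x : EE n => lam * ‖x‖ ^ 2) := contDiff_const.mul (contDiff_norm_sq ℝ)
    exact (contDiff_const.inner ℝ contDiff_id).mul (cf.comp this)
  · have : ContDiff ℝ (⊤ : ℕ∞) (fun x : EE n => lam * ‖x‖ ^ 2) := contDiff_const.mul (contDiff_norm_sq ℝ)
    exact ((cf.comp this).smul contDiff_const).add
      (((contDiff_const.mul (cf1.comp this)).mul (contDiff_const.inner ℝ contDiff_id)).smul contDiff_id)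
  · intro i
    have c1 := cf1.continuous
    have c2 := cf2.continuous
    have : Continuous (fun x : EE n => x i) := (EuclideanSpace.proj (𝕜 := ℝ) i).continuous
    fun_prop
  · intro x
    have := (hI x).mul (hF x)
    have e' : innerSL ℝ (f (lam * ‖x‖ ^ 2) • e + (2 * lam * f1 (lam * ‖x‖ ^ 2) * inner ℝ e x) • x)
      = inner ℝ e x • ((f1 (lam * ‖x‖ ^ 2) * (2 * lam)) • innerSL ℝ x)
        + f (lam * ‖x‖ ^ 2) • innerSL ℝ e := by
      ext y; simp [inner_add_left, inner_smul_left]; ring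
    rw [e']
    exact this
  · intro i x
    have := (((hF x).mul_const (e i)).add
      ((((hF1 x).const_mul (2 * lam)).mul (hI x)).mul (hP i x))).hasLineDerivAt
        (EuclideanSpace.single i 1)
    simp [hin] at this
    have e' : ∀ a b : ℝ, a = b → HasLineDerivAt ℝ (fun y : EE n => f (lam * ‖y‖ ^ 2) * e i + 
      (2 * lam * f1 (lam * ‖y‖ ^ 2) * inner ℝ e y) * y i) a x (EuclideanSpace.single i 1) →
      HasLineDerivAt ℝ (fun y : EE n => (f (lam * ‖y‖ ^ 2) • e + 
      (2 * lam * f1 (lam * ‖y‖ ^ 2) * inner ℝ e y) • y) i) b x (EuclideanSpace.single i 1) := by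
      intro a b hab h
      rw [← hab]; simpa using h
    refine e' _ _ ?_ this
    ring
  · intro x
    have s1 : ∑ i, x i * e i = inner ℝ e x := by
      simp [PiLp.inner_apply]
    have s2 : ∑ i, x i * x i = ‖x‖ ^ 2 := by
      rw [EuclideanSpace.real_norm_sq_eq]; simp [sq]
    have : ∀ i, f1 (lam * ‖x‖ ^ 2) * (2 * lam) * x i * e i
      + ((2 * lam * (f2 (lam * ‖x‖ ^ 2) * (2 * lam) * x i)) * inner ℝ e x
        + (2 * lam * f1 (lam * ‖x‖ ^ 2)) * e i) * x i + 2 * lam * f1 (lam * ‖x‖ ^ 2) * inner ℝ e x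
      = (4 * lam * f1 (lam * ‖x‖ ^ 2)) * (x i * e i)
        + (4 * lam ^ 2 * f2 (lam * ‖x‖ ^ 2) * inner ℝ e x) * (x i * x i)
        + 2 * lam * f1 (lam * ‖x‖ ^ 2) * inner ℝ e x := by intro i; ring
    simp only [this, Finset.sum_add_distrib, ← Finset.mul_sum, s1, s2]
    simp only [Finset.sum_const, Finset.card_univ, Fintype.card_fin, nsmul_eq_mul]
    have o := ode (lam * ‖x‖ ^ 2)
    linear_combination (lam * inner ℝ e x) * o
  · intro x hx
    rw [inner_add_left, inner_smul_left, inner_smul_left, real_inner_self_eq_norm_sq, hx, hlR]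
    simp only [conj_trivial]
    linear_combination inner ℝ e x * hT0 + 2 * f1 T * inner ℝ e x * hlR
  · intro x hx
    rw [mem_closedBall_zero_iff] at hx
    have hm : lam * ‖x‖ ^ 2 ∈ Icc 0 T := by
      refine ⟨by positivity, ?_⟩
      rw [← hlR]; gcongr
    simp only [abs_mul, abs_of_pos (hpos _ hm)]
    rw [mul_comm]
    gcongr
    exact hmin hm

lemma udo {n : ℕ} {R : ℝ} (hR : 0 < R) : UniqueDiffOn ℝ (closedBall (0 : EE n) R) :=
  uniqueDiffOn_convex (convex_closedBall _ _) (by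
    rw [interior_closedBall _ hR.ne']; exact ⟨0, mem_ball_self hR⟩)

/-- data of an eigenfunction -/
structure EigF {n : ℕ} (R lam : ℝ) (e : EE n) (φ : EE n → ℝ) (G : EE n → EE n)
    (D : Fin n → EE n → ℝ) (c : ℝ) : Prop where
  cφ : ContDiff ℝ (⊤ : ℕ∞) φ
  cG : ContDiff ℝ (⊤ : ℕ∞) G
  cD : ∀ i, Continuous (D i)
  d : ∀ x, HasFDerivAt φ (innerSL ℝ (G x)) x
  dG : ∀ i x, HasLineDerivAt ℝ (fun y => G y i) (D i x) x (EuclideanSpace.single i 1)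
  lap : ∀ x, ∑ i, D i x = -lam * φ x
  bd : ∀ x, ‖x‖ = R → inner ℝ (G x) x = 0
  hc : 0 < c
  lb : ∀ x ∈ closedBall (0 : EE n) R, c * |inner ℝ e x| ≤ |φ x|

/-- `lam` has eigenfunctions for all directions -/
def HasEig (n : ℕ) (R lam : ℝ) : Prop := ∀ e : EE n, ∃ φ G D c, EigF R lam e φ G D c

theorem exists_eig' {n : ℕ} (hn : 1 ≤ n) {R : ℝ} (hR : 0 < R) : ∃ lam : ℝ, 0 < lam ∧
    HasEig n R lam := by
  obtain ⟨lam, h0, h⟩ := exists_eig hn hR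
  refine ⟨lam, h0, fun e => ?_⟩
  obtain ⟨φ, G, D, c, h1, h2, h3, h4, h5, h6, h7, h8, h9⟩ := h e
  exact ⟨φ, G, D, c, h1, h2, h3, h4, h5, h6, h7, h8, h9⟩

theorem HasEig.isEig {n : ℕ} (hn : 1 ≤ n) {R : ℝ} (hR : 0 < R) {lam : ℝ} (h : HasEig n R lam) :
    IsLapNeumannEigenvalueBall n R lam := by
  obtain ⟨φ, G, D, c, h⟩ := h (EuclideanSpace.single ⟨0, hn⟩ 1)
  have hfd : ∀ y ∈ closedBall (0 : EE n) R, fderivWithin ℝ φ (closedBall 0 R) y = innerSL ℝ (G y) :=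
    fun y hy => (h.d y).hasFDerivWithinAt.fderivWithin (udo hR y hy)
  refine ⟨φ, h.cφ.contDiffOn, ?_, ?_, ?_⟩
  · refine ⟨EuclideanSpace.single ⟨0, hn⟩ R, by simp [abs_of_pos hR], ?_⟩
    have := h.lb (EuclideanSpace.single ⟨0, hn⟩ R) (by simp [abs_of_pos hR])
    intro h0
    rw [h0] at this
    simp [EuclideanSpace.inner_single_right] at this
    have := h.hc
    nlinarith [mul_pos this (abs_pos.2 hR.ne')]
  · intro x hx
    rw [← h.lap x, lapWithin]
    refine Finset.sum_congr rfl fun i _ => ?_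
    have hxc := ball_subset_closedBall hx
    have hGd : DifferentiableAt ℝ (fun y => G y i) x :=
      ((EuclideanSpace.proj (𝕜 := ℝ) i : EE n →L[ℝ] ℝ).differentiableAt).comp x
        (h.cG.differentiable (by simp) x)
    rw [fderivWithin_congr (f := fun y => G y i) _ _, hGd.fderivWithin (udo hR x hxc)]
    · exact (hGd.hasFDerivAt.hasLineDerivAt _).unique (h.dG i x)
    · intro y hy
      simp only
      rw [hfd y hy]
      simp [EuclideanSpace.inner_single_right]
    · rw [hfd x hxc]
      simp [EuclideanSpace.inner_single_right]
  · intro x hx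
    rw [hfd x (by simp [hx])]
    simp [h.bd x hx, inner_smul_right]

theorem picone_aux {n : ℕ} (hn : 1 ≤ n) {R : ℝ} (hR : 0 < R) {lam : ℝ} {e : EE n}
    {φ : EE n → ℝ} {G : EE n → EE n} {D : Fin n → EE n → ℝ} {c : ℝ} (h : EigF R lam e φ G D c)
    {w : EE n → ℝ} {W : EE n → EE n} (hw : C1B R w W) {δ : ℝ} (hδ : 0 < δ) :
    ∫ x in ball (0 : EE n) R, (lam * (w x ^ 2 * φ x ^ 2 / (φ x ^ 2 + δ))
      - δ * w x ^ 2 / (φ x ^ 2 + δ) ^ 2 * ‖G x‖ ^ 2) ≤ ∫ x in ball (0 : EE n) R, ‖W x‖ ^ 2 := by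
  have cφ : ContinuousOn φ (closedBall 0 R) := h.cφ.continuous.continuousOn
  have cG : ContinuousOn G (closedBall 0 R) := h.cG.continuous.continuousOn
  have cw := hw.cv
  have cW := hw.cV
  have hp : ∀ x, φ x ^ 2 + δ ≠ 0 := fun x => by positivity
  set q : EE n → ℝ := fun x => w x ^ 2 * (φ x / (φ x ^ 2 + δ)) with hq
  set Q : EE n → EE n := fun x => (2 * w x * φ x / (φ x ^ 2 + δ)) • W x
    + (w x ^ 2 * (δ - φ x ^ 2) / (φ x ^ 2 + δ) ^ 2) • G x with hQ
  have cd : ContinuousOn (fun x => φ x ^ 2 + δ) (closedBall 0 R) := (cφ.pow 2).add continuousOn_const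
  have cq : ContinuousOn q (closedBall 0 R) := (cw.pow 2).mul (cφ.div cd fun x _ => hp x)
  have cQ : ContinuousOn Q (closedBall 0 R) :=
    ((((continuousOn_const.mul cw).mul cφ).div cd fun x _ => hp x).smul cW).add
      ((((cw.pow 2).mul (continuousOn_const.sub (cφ.pow 2))).div (cd.pow 2)
        fun x _ => pow_ne_zero 2 (hp x)).smul cG)
  obtain ⟨Mq, hMq⟩ := (isCompact_closedBall (0 : EE n) R).exists_bound_of_continuousOn cq
  obtain ⟨L, hL0, hL⟩ := contDiffOn_lip hR (h := fun x => inner ℝ (G x) x)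
    ((h.cG.of_le (by norm_num)).inner ℝ contDiff_id).contDiffOn
  have hb := bdry_bound hn hR hL h.bd
  have cint : ContinuousOn (fun x => q x * (-lam * φ x) + inner ℝ (Q x) (G x)) (closedBall 0 R) :=
    (cq.mul (continuousOn_const.mul cφ)).add (cQ.inner cG)
  have key := div_mul_zero hR q Q G D (fun x => -lam * φ x) (Mq * L)
    (fun x hx => by
      have h1 := hw.d x hx
      have h2 := h.d x
      have h3 : HasDerivAt (fun t : ℝ => t / (t ^ 2 + δ))
          ((δ - φ x ^ 2) / (φ x ^ 2 + δ) ^ 2) (φ x) := by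
        have := (hasDerivAt_id (φ x)).div (((hasDerivAt_id (φ x)).pow 2).add_const δ) (hp x)
        have e' : (1 * (id (φ x) ^ 2 + δ) - id (φ x) * ((2:ℕ) * id (φ x) ^ (2 - 1) * 1)) /
            (id (φ x) ^ 2 + δ) ^ 2 = (δ - φ x ^ 2) / (φ x ^ 2 + δ) ^ 2 := by
          simp only [id]; congr 1; push_cast; ring
        rw [← e']
        exact this
      have h4 := (h1.pow 2).mul (h3.comp_hasFDerivAt x h2)
      have e' : innerSL ℝ (Q x) = w x ^ 2 • (((δ - φ x ^ 2) / (φ x ^ 2 + δ) ^ 2) • innerSL ℝ (G x))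
          + (φ x / (φ x ^ 2 + δ)) • ((2 • w x ^ (2 - 1)) • innerSL ℝ (W x)) := by
        ext y
        simp [hQ]
        ring
      rw [e']
      exact h4)
    (cQ.mono ball_subset_closedBall) (fun i x _ => h.dG i x) (cG.mono ball_subset_closedBall)
    (fun i => (h.cD i).continuousOn) (fun x _ => h.lap x)
    (fun x hx => by
      rw [abs_mul, mul_assoc]
      exact mul_le_mul (hMq x (ball_subset_closedBall hx)) (hb x hx) (abs_nonneg _)
        ((norm_nonneg _).trans (hMq x (ball_subset_closedBall hx))))
    cint.intBall
  have cF : ContinuousOn (fun x => lam * (w x ^ 2 * φ x ^ 2 / (φ x ^ 2 + δ))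
      - δ * w x ^ 2 / (φ x ^ 2 + δ) ^ 2 * ‖G x‖ ^ 2) (closedBall 0 R) :=
    (continuousOn_const.mul (((cw.pow 2).mul (cφ.pow 2)).div cd fun x _ => hp x)).sub
      (((continuousOn_const.mul (cw.pow 2)).div (cd.pow 2)
        fun x _ => pow_ne_zero 2 (hp x)).mul (cG.norm.pow 2))
  have cW2 : ContinuousOn (fun x => ‖W x‖ ^ 2) (closedBall 0 R) := cW.norm.pow 2
  calc _ ≤ ∫ x in ball (0 : EE n) R, (‖W x‖ ^ 2 - (q x * (-lam * φ x) + inner ℝ (Q x) (G x))) := by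
        apply setIntegral_mono_on cF.intBall (cW2.sub cint).intBall measurableSet_ball
        intro x hx
        have h1 := sq_nonneg ‖W x - (w x * φ x / (φ x ^ 2 + δ)) • G x‖
        rw [norm_sub_sq_real, norm_smul, inner_smul_right, mul_pow, Real.norm_eq_abs, sq_abs] at h1
        simp only [Pi.sub_apply, hQ, hq, inner_add_left, inner_smul_left, conj_trivial, real_inner_self_eq_norm_sq]
        have hpx := hp x
        rw [← sub_nonneg]
        refine h1.trans_eq ?_
        field_simp
        ring
    _ = _ := by
        rw [integral_sub cW2.intBall cint.intBall, key, sub_zero]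

theorem picone {n : ℕ} (hn : 1 ≤ n) {R : ℝ} (hR : 0 < R) {lam : ℝ} (hlam : 0 < lam) {e : EE n}
    {φ : EE n → ℝ} {G : EE n → EE n} {D : Fin n → EE n → ℝ} {c : ℝ} (h : EigF R lam e φ G D c)
    {w : EE n → ℝ} {W : EE n → EE n} (hw : C1B R w W) {C : ℝ} (hC : 0 ≤ C)
    (hb : ∀ x ∈ closedBall (0 : EE n) R, |w x| ≤ C * |inner ℝ e x|) :
    lam * ∫ x in ball (0 : EE n) R, w x ^ 2 ≤ ∫ x in ball (0 : EE n) R, ‖W x‖ ^ 2 := by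
  have cφ : ContinuousOn φ (closedBall 0 R) := h.cφ.continuous.continuousOn
  have cG : ContinuousOn G (closedBall 0 R) := h.cG.continuous.continuousOn
  have cw := hw.cv
  set δ : ℕ → ℝ := fun k => 1 / ((k : ℝ) + 1) with hδ
  have hδp : ∀ k, 0 < δ k := fun k => by positivity
  have hδt : Tendsto δ atTop (𝓝 0) := tendsto_one_div_add_atTop_nhds_zero_nat
  have hc := h.hc
  have hwφ : ∀ x ∈ closedBall (0 : EE n) R, w x ^ 2 ≤ (C / c) ^ 2 * φ x ^ 2 := by
    intro x hx
    have h1 := hb x hx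
    have h2 := h.lb x hx
    have h3 : |w x| ≤ C / c * |φ x| := by
      calc |w x| ≤ C * |inner ℝ e x| := h1
        _ = C / c * (c * |inner ℝ e x|) := by field_simp
        _ ≤ _ := by gcongr
    rw [← mul_pow, sq_le_sq, abs_mul, abs_of_nonneg (by positivity : 0 ≤ C / c)]
    exact h3
  have hF : ∀ k, ContinuousOn (fun x => lam * (w x ^ 2 * φ x ^ 2 / (φ x ^ 2 + δ k))
      - δ k * w x ^ 2 / (φ x ^ 2 + δ k) ^ 2 * ‖G x‖ ^ 2) (closedBall 0 R) := by
    intro k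
    have hp : ∀ x, φ x ^ 2 + δ k ≠ 0 := fun x => by have := hδp k; positivity
    have cd : ContinuousOn (fun x => φ x ^ 2 + δ k) (closedBall 0 R) :=
      (cφ.pow 2).add continuousOn_const
    exact (continuousOn_const.mul (((cw.pow 2).mul (cφ.pow 2)).div cd fun x _ => hp x)).sub
      (((continuousOn_const.mul (cw.pow 2)).div (cd.pow 2)
        fun x _ => pow_ne_zero 2 (hp x)).mul (cG.norm.pow 2))
  have cB : ContinuousOn (fun x => lam * w x ^ 2 + (C / c) ^ 2 * ‖G x‖ ^ 2) (closedBall 0 R) :=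
    (continuousOn_const.mul (cw.pow 2)).add (continuousOn_const.mul (cG.norm.pow 2))
  have lim : Tendsto (fun k => ∫ x in ball (0 : EE n) R, (lam * (w x ^ 2 * φ x ^ 2 / (φ x ^ 2 + δ k))
      - δ k * w x ^ 2 / (φ x ^ 2 + δ k) ^ 2 * ‖G x‖ ^ 2)) atTop
      (𝓝 (∫ x in ball (0 : EE n) R, lam * w x ^ 2)) := by
    apply tendsto_integral_of_dominated_convergence
      (fun x => lam * w x ^ 2 + (C / c) ^ 2 * ‖G x‖ ^ 2)
    · intro k; exact (hF k).intBall.aestronglyMeasurable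
    · exact cB.intBall
    · intro k
      rw [ae_restrict_iff' measurableSet_ball]
      refine Eventually.of_forall fun x hx => ?_
      have hk := hδp k
      have h1 := hwφ x (ball_subset_closedBall hx)
      have a1 : w x ^ 2 * φ x ^ 2 / (φ x ^ 2 + δ k) ≤ w x ^ 2 := by
        rw [div_le_iff₀ (by positivity)]
        nlinarith [sq_nonneg (w x)]
      have a2 : δ k * w x ^ 2 / (φ x ^ 2 + δ k) ^ 2 ≤ (C / c) ^ 2 := by
        rw [div_le_iff₀ (by positivity)]
        calc δ k * w x ^ 2 ≤ δ k * ((C / c) ^ 2 * φ x ^ 2) := by gcongr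
          _ = (C / c) ^ 2 * (δ k * φ x ^ 2) := by ring
          _ ≤ _ := by
            gcongr
            nlinarith [sq_nonneg (φ x), sq_nonneg (φ x ^ 2), mul_nonneg hk.le (sq_nonneg (φ x))]
      have b1 : 0 ≤ w x ^ 2 * φ x ^ 2 / (φ x ^ 2 + δ k) := by positivity
      have b2 : 0 ≤ δ k * w x ^ 2 / (φ x ^ 2 + δ k) ^ 2 := by positivity
      have a3 : δ k * w x ^ 2 / (φ x ^ 2 + δ k) ^ 2 * ‖G x‖ ^ 2 ≤ (C / c) ^ 2 * ‖G x‖ ^ 2 := by gcongr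
      have b3 := mul_nonneg b2 (sq_nonneg ‖G x‖)
      have a4 := mul_le_mul_of_nonneg_left a1 hlam.le
      have b4 := mul_nonneg hlam.le b1
      rw [Real.norm_eq_abs, abs_le]
      constructor
      · nlinarith [mul_nonneg hlam.le (sq_nonneg (w x))]
      · nlinarith [mul_nonneg (sq_nonneg (C / c)) (sq_nonneg ‖G x‖)]
    · rw [ae_restrict_iff' measurableSet_ball]
      refine Eventually.of_forall fun x hx => ?_
      have h1 := hwφ x (ball_subset_closedBall hx)
      by_cases h0 : φ x = 0
      · have : w x = 0 := by
          rw [h0] at h1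
          have : w x ^ 2 = 0 := le_antisymm (by simpa using h1) (sq_nonneg _)
          simpa using this
        simp [this]
      · have hp : φ x ^ 2 ≠ 0 := pow_ne_zero 2 h0
        have hcont : ContinuousAt (fun d : ℝ => lam * (w x ^ 2 * φ x ^ 2 / (φ x ^ 2 + d))
            - d * w x ^ 2 / (φ x ^ 2 + d) ^ 2 * ‖G x‖ ^ 2) 0 := by
          have h2 : φ x ^ 2 + 0 ≠ 0 := by simpa using h0
          have h3 : (φ x ^ 2 + 0) ^ 2 ≠ 0 := pow_ne_zero 2 h2
          fun_prop (disch := assumption)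
        have := hcont.tendsto.comp hδt
        simp only [Function.comp_def] at this
        have e' : lam * (w x ^ 2 * φ x ^ 2 / (φ x ^ 2 + 0))
            - 0 * w x ^ 2 / (φ x ^ 2 + 0) ^ 2 * ‖G x‖ ^ 2 = lam * w x ^ 2 := by
          simp only [add_zero]; field_simp; ring
        rw [e'] at this
        exact this
  rw [← integral_const_mul]
  exact le_of_tendsto' lim fun k => picone_aux hn hR h hw (hδp k)

/-- reflection in the hyperplane orthogonal to `e` -/
def hRefl {n : ℕ} (e : EE n) : EE n ≃ₗᵢ[ℝ] EE n := Submodule.reflection (Submodule.span ℝ {e})ᗮ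

lemma hRefl_dist {n : ℕ} {e : EE n} (he : e ≠ 0) (x : EE n) :
    ‖x - hRefl e x‖ = 2 * |inner ℝ e x| / ‖e‖ := by
  have hp : 0 < ‖e‖ := norm_pos_iff.2 he
  rw [hRefl, Submodule.reflection_orthogonal_apply, Submodule.reflection_singleton_apply]
  have : x - -(2 • (inner ℝ e x / (‖e‖ : ℝ) ^ 2) • e - x) = (2 * inner ℝ e x / ‖e‖ ^ 2) • e := by
    rw [mul_div_assoc, ← smul_smul]; module
  simp only [RCLike.ofReal_real_eq_id, id] at *
  rw [this, norm_smul, Real.norm_eq_abs, abs_div, abs_mul, abs_of_pos (two_pos : (0:ℝ) < 2),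
    abs_of_nonneg (by positivity : 0 ≤ ‖e‖ ^ 2)]
  field_simp

theorem picone_odd {n : ℕ} (hn : 1 ≤ n) {R : ℝ} (hR : 0 < R) {lam : ℝ} (hlam : 0 < lam)
    (hE : HasEig n R lam) {e : EE n} (he : e ≠ 0)
    {w : EE n → ℝ} {W : EE n → EE n} (hw : C1B R w W)
    (hodd : ∀ x ∈ closedBall (0 : EE n) R, w (hRefl e x) = - w x) :
    lam * ∫ x in ball (0 : EE n) R, w x ^ 2 ≤ ∫ x in ball (0 : EE n) R, ‖W x‖ ^ 2 := by
  obtain ⟨φ, G, D, c, h⟩ := hE e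
  obtain ⟨L, hL0, hL⟩ := hw.lip hR
  have hp : 0 < ‖e‖ := norm_pos_iff.2 he
  refine picone hn hR hlam h hw (C := L / ‖e‖) (by positivity) fun x hx => ?_
  have := hL x hx (hRefl e x) (by
    rw [mem_closedBall_zero_iff] at *; rwa [LinearIsometryEquiv.norm_map])
  rw [hodd x hx, hRefl_dist he, sub_neg_eq_add, ← two_mul, abs_mul, abs_of_pos (two_pos : (0:ℝ) < 2)]
    at this
  have e' : L * (2 * |inner ℝ e x| / ‖e‖) = 2 * (L / ‖e‖ * |inner ℝ e x|) := by ring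
  linarith

lemma smul_mem_cb {n : ℕ} {R : ℝ} {x : EE n} (hx : x ∈ closedBall (0 : EE n) R) {t : ℝ}
    (ht : t ∈ Icc (0:ℝ) 1) : t • x ∈ closedBall (0 : EE n) R := by
  rw [mem_closedBall_zero_iff] at *
  rw [norm_smul, Real.norm_eq_abs, abs_of_nonneg ht.1]
  nlinarith [norm_nonneg x, ht.2]

lemma smul_mem_b {n : ℕ} {R : ℝ} {x : EE n} (hx : x ∈ ball (0 : EE n) R) {t : ℝ}
    (ht : t ∈ Icc (0:ℝ) 1) : t • x ∈ ball (0 : EE n) R := by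
  rw [mem_ball_zero_iff] at *
  rw [norm_smul, Real.norm_eq_abs, abs_of_nonneg ht.1]
  nlinarith [norm_nonneg x, ht.2]

/-- weighted averages along rays -/
def rayAvg {n : ℕ} {F : Type*} [NormedAddCommGroup F] [NormedSpace ℝ F] (k : ℕ) (h : EE n → F)
    (x : EE n) : F := ∫ t in Icc (0:ℝ) 1, t ^ k • h (t • x)

section
variable {n : ℕ} {R : ℝ} {F : Type*} [NormedAddCommGroup F] [NormedSpace ℝ F]

lemma ray_cont (k : ℕ) {h : EE n → F} (hc : ContinuousOn h (closedBall 0 R)) {x : EE n}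
    (hx : x ∈ closedBall (0 : EE n) R) : ContinuousOn (fun t : ℝ => t ^ k • h (t • x)) (Icc 0 1) :=
  (continuousOn_id.pow k).smul (hc.comp (by fun_prop) fun _ ht => smul_mem_cb hx ht)

lemma ray_int (k : ℕ) {h : EE n → F} (hc : ContinuousOn h (closedBall 0 R)) {x : EE n}
    (hx : x ∈ closedBall (0 : EE n) R) :
    IntegrableOn (fun t : ℝ => t ^ k • h (t • x)) (Icc 0 1) :=
  (ray_cont k hc hx).integrableOn_compact isCompact_Icc

lemma ray_bound (k : ℕ) {h : EE n → F} {C : ℝ}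
    (hC : ∀ x ∈ closedBall (0 : EE n) R, ‖h x‖ ≤ C) {x : EE n}
    (hx : x ∈ closedBall (0 : EE n) R) {t : ℝ} (ht : t ∈ Icc (0:ℝ) 1) :
    ‖t ^ k • h (t • x)‖ ≤ C := by
  have h1 := hC _ (smul_mem_cb hx ht)
  rw [norm_smul, norm_pow, Real.norm_eq_abs, abs_of_nonneg ht.1]
  have := pow_le_one₀ ht.1 ht.2 (n := k)
  have h0 := pow_nonneg ht.1 k
  nlinarith [norm_nonneg (h (t • x))]

lemma rayAvg_cont (k : ℕ) {h : EE n → F} (hc : ContinuousOn h (closedBall 0 R)) :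
    ContinuousOn (rayAvg k h) (closedBall 0 R) := by
  obtain ⟨C, hC⟩ := (isCompact_closedBall (0 : EE n) R).exists_bound_of_continuousOn hc
  intro x hx
  unfold rayAvg
  apply continuousWithinAt_of_dominated (bound := fun _ => C)
  · filter_upwards [self_mem_nhdsWithin] with y hy
    exact (ray_int k hc hy).aestronglyMeasurable
  · filter_upwards [self_mem_nhdsWithin] with y hy
    rw [ae_restrict_iff' measurableSet_Icc]
    exact Eventually.of_forall fun t ht => ray_bound k hC hy ht
  · exact integrableOn_const (by simp)
  · rw [ae_restrict_iff' measurableSet_Icc]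
    refine Eventually.of_forall fun t ht => ?_
    refine ContinuousWithinAt.const_smul ?_ _
    exact ContinuousWithinAt.comp (t := closedBall 0 R) (hc _ (smul_mem_cb hx ht))
      (by fun_prop) (fun y hy => smul_mem_cb hy ht)
end

lemma rayAvg_c1b {n : ℕ} {R : ℝ} (k : ℕ) {v : EE n → ℝ} {V : EE n → EE n} (h : C1B R v V) :
    C1B R (rayAvg k v) (rayAvg (k + 1) V) := by
  refine ⟨rayAvg_cont k h.cv, rayAvg_cont (k + 1) h.cV, fun x hx => ?_⟩
  obtain ⟨C, hC⟩ := (isCompact_closedBall (0 : EE n) R).exists_bound_of_continuousOn h.cV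
  have hsub := fun y (hy : y ∈ ball (0 : EE n) R) => ball_subset_closedBall hy
  have cI : ContinuousOn (fun x => innerSL ℝ (V x)) (closedBall 0 R) :=
    (innerSL ℝ).continuous.comp_continuousOn h.cV
  have key := hasFDerivAt_integral_of_dominated_of_fderiv_le (𝕜 := ℝ)
    (μ := volume.restrict (Icc (0:ℝ) 1)) (F := fun y t => t ^ k • v (t • y))
    (F' := fun y t => t ^ (k + 1) • innerSL ℝ (V (t • y))) (x₀ := x) (bound := fun _ => C)
    (isOpen_ball.mem_nhds hx)
    (by filter_upwards [isOpen_ball.mem_nhds hx] with y hy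
        exact (ray_int k h.cv (hsub y hy)).aestronglyMeasurable)
    (ray_int k h.cv (hsub x hx))
    (ray_int (k + 1) cI (hsub x hx)).aestronglyMeasurable
    (by
      rw [ae_restrict_iff' measurableSet_Icc]
      exact Eventually.of_forall fun t ht y hy => ray_bound (k + 1)
        (h := fun x => innerSL ℝ (V x)) (by simpa only [innerSL_apply_norm] using hC) (hsub y hy) ht)
    (integrableOn_const (by simp))
    (by
      rw [ae_restrict_iff' measurableSet_Icc]
      refine Eventually.of_forall fun t ht y hy => ?_
      have h1 := h.d _ (smul_mem_b hy ht)
      have h2 : HasFDerivAt (fun y : EE n => t • y) (t • ContinuousLinearMap.id ℝ (EE n)) y :=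
        (hasFDerivAt_id y).const_smul t
      have h3 := (h1.comp y h2).const_smul (t ^ k)
      have e : t ^ k • (innerSL ℝ (V (t • y))).comp (t • ContinuousLinearMap.id ℝ (EE n)) =
          t ^ (k + 1) • innerSL ℝ (V (t • y)) := by
        ext z; simp [inner_smul_right]; ring
      rw [← e]
      exact h3)
  have e : ∫ t in Icc (0:ℝ) 1, t ^ (k + 1) • innerSL ℝ (V (t • x)) =
      innerSL ℝ (rayAvg (k + 1) V x) := by
    ext z
    rw [ContinuousLinearMap.integral_apply (ray_int (k + 1) cI (hsub x hx)), innerSL_apply_apply,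
      real_inner_comm, rayAvg, ← integral_inner (ray_int (k + 1) h.cV (hsub x hx))]
    congr 1; ext t
    simp [inner_smul_right, real_inner_comm]
  rw [← e]
  exact key

lemma rayAvg_div {n : ℕ} (hn : 1 ≤ n) {R : ℝ} {v : EE n → ℝ} {V : EE n → EE n} (h : C1B R v V)
    {x : EE n} (hx : x ∈ ball (0 : EE n) R) :
    rayAvg (n - 1) v x * n + inner ℝ (rayAvg (n - 1 + 1) V x) x = v x := by
  have hxc := ball_subset_closedBall hx
  have hn' : n - 1 + 1 = n := by omega
  rw [real_inner_comm, rayAvg, rayAvg, ← integral_inner (ray_int _ h.cV hxc), ← integral_mul_const,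
    ← integral_add ((ray_int _ h.cv hxc).mul_const _) ((ray_int _ h.cV hxc).const_inner x),
    integral_Icc_eq_integral_Ioc, ← intervalIntegral.integral_of_le zero_le_one, hn']
  have cd : ContinuousOn (fun t : ℝ => t ^ (n - 1) • v (t • x) * n + inner ℝ x (t ^ n • V (t • x)))
      (Icc 0 1) := ((ray_cont _ h.cv hxc).mul continuousOn_const).add
        (continuousOn_const.inner (ray_cont _ h.cV hxc))
  rw [intervalIntegral.integral_eq_sub_of_hasDerivAt (f := fun t : ℝ => t ^ n * v (t • x))]
  · simp; omega
  · intro t ht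
    rw [uIcc_of_le zero_le_one] at ht
    have h1 := h.d _ (smul_mem_b hx ht)
    have h2 : HasDerivAt (fun t : ℝ => t • x) ((1:ℝ) • x) t := (hasDerivAt_id t).smul_const x
    have h3 := (hasDerivAt_pow n t).mul (h1.comp_hasDerivAt t h2)
    have e : n * t ^ (n - 1) * v (t • x) + t ^ n * innerSL ℝ (V (t • x)) ((1:ℝ) • x) =
        t ^ (n - 1) • v (t • x) * n + inner ℝ x (t ^ n • V (t • x)) := by
      simp [inner_smul_right, real_inner_comm]; ring
    rw [← e]
    exact h3
  · rw [← uIcc_of_le zero_le_one] at cd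
    exact cd.intervalIntegrable

section
variable {n : ℕ} {R : ℝ} {v w : EE n → ℝ} {V W : EE n → EE n}

lemma C1B.mul (h : C1B R v V) (k : C1B R w W) :
    C1B R (fun x => v x * w x) (fun x => v x • W x + w x • V x) := by
  refine ⟨h.cv.mul k.cv, (h.cv.smul k.cV).add (k.cv.smul h.cV), fun x hx => ?_⟩
  have := (h.d x hx).mul (k.d x hx)
  have e : innerSL ℝ (v x • W x + w x • V x) = v x • innerSL ℝ (W x) + w x • innerSL ℝ (V x) := by
    ext y; simp
  rw [e]
  exact this

lemma C1B.sub_const (h : C1B R v V) (c : ℝ) : C1B R (fun x => v x - c) V :=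
  ⟨h.cv.sub continuousOn_const, h.cV, fun x hx => (h.d x hx).sub_const c⟩

lemma C1B.coord (i : Fin n) : C1B R (fun x : EE n => x i) (fun _ => EuclideanSpace.single i 1) := by
  refine ⟨(EuclideanSpace.proj (𝕜 := ℝ) i).continuous.continuousOn, continuousOn_const, fun x _ => ?_⟩
  have e : innerSL ℝ (EuclideanSpace.single i (1:ℝ)) = (EuclideanSpace.proj (𝕜 := ℝ) i : EE n →L[ℝ] ℝ) := by
    ext y; simp [EuclideanSpace.inner_single_left]
  rw [e]
  exact (EuclideanSpace.proj (𝕜 := ℝ) i : EE n →L[ℝ] ℝ).hasFDerivAt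

/-- radial functions on the ball -/
def IsRad (R : ℝ) (v : EE n → ℝ) : Prop :=
  ∀ x ∈ closedBall (0 : EE n) R, ∀ y ∈ closedBall (0 : EE n) R, ‖x‖ = ‖y‖ → v x = v y

lemma IsRad.rayAvg (h : IsRad R v) (k : ℕ) : IsRad R (rayAvg k v) := by
  intro x hx y hy hxy
  unfold _root_.rayAvg
  refine setIntegral_congr_fun measurableSet_Icc fun t ht => ?_
  rw [h _ (smul_mem_cb hx ht) _ (smul_mem_cb hy ht) (by rw [norm_smul, norm_smul, hxy])]

lemma C1B.rad_perp (h : C1B R v V) (hr : IsRad R v) {x : EE n} (hx : x ∈ ball (0 : EE n) R)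
    {y : EE n} (hy : inner ℝ x y = 0) : inner ℝ (V x) y = 0 := by
  have h1 : HasDerivAt (fun t : ℝ => v (x + t • y)) (inner ℝ (V x) y) 0 := by
    have := (h.d x hx).hasLineDerivAt y
    simpa [HasLineDerivAt] using this
  have h2 : HasDerivAt (fun t : ℝ => v (x + t • (-y))) (inner ℝ (V x) (-y)) 0 := by
    have := (h.d x hx).hasLineDerivAt (-y)
    simpa [HasLineDerivAt] using this
  have hev : ∀ z : EE n, ∀ᶠ t : ℝ in 𝓝 0, x + t • z ∈ ball (0 : EE n) R := by
    intro z
    have hc : ContinuousAt (fun t : ℝ => x + t • z) 0 := by fun_prop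
    exact hc.eventually_mem (by simpa using isOpen_ball.mem_nhds hx)
  have heq : (fun t : ℝ => v (x + t • y)) =ᶠ[𝓝 0] (fun t : ℝ => v (x + t • (-y))) := by
    filter_upwards [hev y, hev (-y)] with t h3 h4
    refine hr _ (ball_subset_closedBall h3) _ (ball_subset_closedBall h4) ?_
    rw [← sq_eq_sq₀ (norm_nonneg _) (norm_nonneg _), norm_add_sq_real, norm_add_sq_real]
    simp [inner_smul_right, hy, norm_smul]
  have h5 := h1.unique (h2.congr_of_eventuallyEq heq)
  rw [inner_neg_right] at h5
  linarith

lemma C1B.rad_par (h : C1B R v V) (hr : IsRad R v) {x : EE n} (hx : x ∈ ball (0 : EE n) R) :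
    ‖x‖ ^ 2 * ‖V x‖ ^ 2 = inner ℝ (V x) x ^ 2 := by
  have := h.rad_perp hr hx (y := ‖x‖ ^ 2 • V x - (inner ℝ (V x) x) • x) (by
    rw [inner_sub_right, inner_smul_right, inner_smul_right, real_inner_self_eq_norm_sq,
      real_inner_comm]; ring)
  rw [inner_sub_right, inner_smul_right, inner_smul_right, real_inner_self_eq_norm_sq] at this
  linarith
end

lemma hRefl_apply {n : ℕ} (e x : EE n) :
    hRefl e x = x - (2 * inner ℝ e x / ‖e‖ ^ 2) • e := by
  rw [hRefl, Submodule.reflection_orthogonal_apply, Submodule.reflection_singleton_apply]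
  simp only [RCLike.ofReal_real_eq_id, id]
  rw [mul_div_assoc, ← smul_smul]; module

theorem radial_ineq {n : ℕ} (hn : 1 ≤ n) {R : ℝ} (hR : 0 < R) {lam : ℝ} (hlam : 0 < lam)
    (hE : HasEig n R lam) {v : EE n → ℝ} {V : EE n → EE n} (h : C1B R v V) (hr : IsRad R v)
    (hmean : ∫ x in ball (0 : EE n) R, v x = 0) :
    lam * ∫ x in ball (0 : EE n) R, v x ^ 2 ≤ ∫ x in ball (0 : EE n) R, ‖V x‖ ^ 2 := by
  set m := rayAvg (n - 1) v with hm
  set P := rayAvg (n - 1 + 1) V with hP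
  have hmP : C1B R m P := rayAvg_c1b (n - 1) h
  have hmr : IsRad R m := hr.rayAvg _
  have hdiv : ∀ x ∈ ball (0 : EE n) R, m x * n + inner ℝ (P x) x = v x := fun x hx =>
    rayAvg_div hn h hx
  have cid : ContinuousOn (fun x : EE n => x) (closedBall 0 R) := continuousOn_id
  -- `m` vanishes on the sphere
  have hm0 : ∀ x : EE n, ‖x‖ = R → m x = 0 := by
    set p : EE n := EuclideanSpace.single ⟨0, hn⟩ R
    have hp : ‖p‖ = R := by simp [p, abs_of_pos hR]
    have hcst : ∀ x : EE n, ‖x‖ = R → m x = m p := fun x hx =>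
      hmr x (by simp [hx]) p (by simp [hp]) (by rw [hx, hp])
    have h1 := div_radial hn hR (hmP.sub_const (m p)) (fun x hx => by simp [hcst x hx])
    have h2 : ∫ x in ball (0 : EE n) R, ((m x - m p) * n + inner ℝ (P x) x) =
        ∫ x in ball (0 : EE n) R, (v x - m p * n) := by
      refine setIntegral_congr_fun measurableSet_ball fun x hx => ?_
      rw [← hdiv x hx]; ring
    rw [h2, integral_sub h.cv.intBall (integrableOn_const (by simp [measure_ball_lt_top.ne])), hmean,
      setIntegral_const, smul_eq_mul, zero_sub, neg_eq_zero, mul_eq_zero] at h1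
    have hvol : (volume : Measure (EE n)).real (ball 0 R) ≠ 0 := by
      rw [Measure.real, ENNReal.toReal_ne_zero]
      exact ⟨(measure_ball_pos _ _ hR).ne', measure_ball_lt_top.ne⟩
    have hnn : (n : ℝ) ≠ 0 := by positivity
    have : m p = 0 := by
      rcases h1 with h1 | h1
      · exact absurd h1 hvol
      · rcases mul_eq_zero.1 h1 with h1 | h1
        · exact h1
        · exact absurd h1 hnn
    intro x hx
    rw [hcst x hx, this]
  have A1 := div_radial hn hR (hmP.mul hmP) (fun x hx => by simp [hm0 x hx])
  have A2 := div_radial hn hR (h.mul hmP) (fun x hx => by simp [hm0 x hx])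
  -- componentwise Picone
  have hX : ∀ i : Fin n, C1B R (fun x : EE n => x i * m x)
      (fun x => x i • P x + m x • EuclideanSpace.single i 1) := fun i => (C1B.coord i).mul hmP
  have B : ∀ i : Fin n, lam * ∫ x in ball (0 : EE n) R, (x i * m x) ^ 2 ≤
      ∫ x in ball (0 : EE n) R, ‖x i • P x + m x • EuclideanSpace.single i 1‖ ^ 2 := by
    intro i
    refine picone_odd hn hR hlam hE (e := EuclideanSpace.single i 1) (by simp) (hX i) ?_
    intro x hx
    have h1 : m (hRefl (EuclideanSpace.single i 1) x) = m x := by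
      refine hmr _ ?_ _ hx (by rw [LinearIsometryEquiv.norm_map])
      rw [mem_closedBall_zero_iff, LinearIsometryEquiv.norm_map]
      simpa using hx
    have h2 : (hRefl (EuclideanSpace.single i 1) x) i = - x i := by
      rw [hRefl_apply]; simp [EuclideanSpace.inner_single_left]; ring
    rw [h1, h2]; ring
  have C1 : lam * ∫ x in ball (0 : EE n) R, m x ^ 2 * ‖x‖ ^ 2 ≤
      ∫ x in ball (0 : EE n) R, ∑ i, ‖x i • P x + m x • EuclideanSpace.single i (1:ℝ)‖ ^ 2 := by
    have e1 : ∫ x in ball (0 : EE n) R, m x ^ 2 * ‖x‖ ^ 2 =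
        ∫ x in ball (0 : EE n) R, ∑ i, (x i * m x) ^ 2 := by
      refine setIntegral_congr_fun measurableSet_ball fun x hx => ?_
      simp only [mul_pow, ← Finset.sum_mul]
      rw [EuclideanSpace.real_norm_sq_eq, mul_comm]
    have i1 : ∀ i ∈ Finset.univ, IntegrableOn (fun x : EE n => (x i * m x) ^ 2) (ball 0 R) :=
      fun i _ => ((hX i).cv.pow 2).intBall
    have i2 : ∀ i ∈ Finset.univ, IntegrableOn (fun x : EE n =>
        ‖x i • P x + m x • EuclideanSpace.single i (1:ℝ)‖ ^ 2) (ball 0 R) :=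
      fun i _ => ((hX i).cV.norm.pow 2).intBall
    rw [e1, integral_finsetSum _ i1, integral_finsetSum _ i2, Finset.mul_sum]
    exact Finset.sum_le_sum fun i _ => B i
  have hsum : ∀ x ∈ ball (0 : EE n) R, ∑ i, ‖x i • P x + m x • EuclideanSpace.single i (1:ℝ)‖ ^ 2 =
      v x ^ 2 - ((n:ℝ) - 1) * (m x * m x * n + inner ℝ (m x • P x + m x • P x) x) := by
    intro x hx
    have e1 : ∀ i, ‖x i • P x + m x • EuclideanSpace.single i (1:ℝ)‖ ^ 2 =
        x i ^ 2 * ‖P x‖ ^ 2 + 2 * m x * (P x i * x i) + m x ^ 2 := by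
      intro i
      rw [norm_add_sq_real, norm_smul, norm_smul, inner_smul_left, inner_smul_right,
        EuclideanSpace.inner_single_right]
      simp [mul_pow]; ring
    have s1 : ∑ i, P x i * x i = inner ℝ (P x) x := by
      simp [PiLp.inner_apply, mul_comm]
    have s2 : ∑ i, x i ^ 2 = ‖x‖ ^ 2 := by rw [EuclideanSpace.real_norm_sq_eq]
    simp only [e1, Finset.sum_add_distrib, ← Finset.mul_sum, ← Finset.sum_mul, s1, s2]
    rw [hmP.rad_par hmr hx, ← hdiv x hx, inner_add_left, inner_smul_left]
    simp
    ring
  have cA1 : ContinuousOn (fun x => m x * m x * n + inner ℝ (m x • P x + m x • P x) x)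
      (closedBall 0 R) :=
    ((hmP.mul hmP).cv.mul continuousOn_const).add ((hmP.mul hmP).cV.inner cid)
  have C2 : ∫ x in ball (0 : EE n) R, ∑ i, ‖x i • P x + m x • EuclideanSpace.single i (1:ℝ)‖ ^ 2 =
      ∫ x in ball (0 : EE n) R, v x ^ 2 := by
    have i1 : IntegrableOn (fun x : EE n => v x ^ 2) (ball 0 R) := (h.cv.pow 2).intBall
    have i2 : IntegrableOn (fun x : EE n => ((n:ℝ) - 1) *
        (m x * m x * n + inner ℝ (m x • P x + m x • P x) x)) (ball 0 R) := cA1.intBall.const_mul _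
    rw [setIntegral_congr_fun measurableSet_ball hsum, integral_sub i1 i2, integral_const_mul, A1]
    ring
  have cV2 : ContinuousOn (fun x => ‖V x‖ ^ 2) (closedBall 0 R) := h.cV.norm.pow 2
  have cmV : ContinuousOn (fun x => m x * inner ℝ (V x) x) (closedBall 0 R) :=
    hmP.cv.mul (h.cV.inner cid)
  have cmx : ContinuousOn (fun x => m x ^ 2 * ‖x‖ ^ 2) (closedBall 0 R) :=
    (hmP.cv.pow 2).mul (cid.norm.pow 2)
  have cv2 : ContinuousOn (fun x => v x ^ 2) (closedBall 0 R) := h.cv.pow 2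
  have A3 : ∫ x in ball (0 : EE n) R, m x * inner ℝ (V x) x = - ∫ x in ball (0 : EE n) R, v x ^ 2 := by
    have : ∫ x in ball (0 : EE n) R, (v x * m x * n + inner ℝ (v x • P x + m x • V x) x) =
        ∫ x in ball (0 : EE n) R, (v x ^ 2 + m x * inner ℝ (V x) x) := by
      refine setIntegral_congr_fun measurableSet_ball fun x hx => ?_
      simp only [inner_add_left, inner_smul_left, conj_trivial]
      linear_combination v x * hdiv x hx
    rw [this, integral_add cv2.intBall cmV.intBall] at A2
    linarith
  have Z : 0 ≤ ∫ x in ball (0 : EE n) R, ‖V x + (lam * m x) • x‖ ^ 2 :=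
    integral_nonneg fun x => sq_nonneg _
  have Z' : ∫ x in ball (0 : EE n) R, ‖V x + (lam * m x) • x‖ ^ 2 =
      (∫ x in ball (0 : EE n) R, ‖V x‖ ^ 2) + 2 * lam * (∫ x in ball (0 : EE n) R, m x * inner ℝ (V x) x)
        + lam ^ 2 * ∫ x in ball (0 : EE n) R, m x ^ 2 * ‖x‖ ^ 2 := by
    have i1 : IntegrableOn (fun x : EE n => 2 * lam * (m x * inner ℝ (V x) x)) (ball 0 R) :=
      cmV.intBall.const_mul _
    have i2 : IntegrableOn (fun x : EE n => lam ^ 2 * (m x ^ 2 * ‖x‖ ^ 2)) (ball 0 R) :=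
      cmx.intBall.const_mul _
    have i3 : IntegrableOn (fun x : EE n => ‖V x‖ ^ 2 + 2 * lam * (m x * inner ℝ (V x) x))
      (ball 0 R) := cV2.intBall.add i1
    rw [← integral_const_mul, ← integral_const_mul, ← integral_add cV2.intBall i1,
      ← integral_add i3 i2]
    refine setIntegral_congr_fun measurableSet_ball fun x hx => ?_
    rw [norm_add_sq_real, norm_smul, inner_smul_right, mul_pow, Real.norm_eq_abs, sq_abs]
    ring
  rw [Z', A3] at Z
  rw [C2] at C1
  have := mul_le_mul_of_nonneg_left C1 hlam.le
  nlinarith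

lemma zero_of_int {n : ℕ} {R : ℝ} {h : EE n → ℝ}
    (hc : ContinuousOn h (closedBall 0 R)) (h0 : ∫ x in ball (0 : EE n) R, h x ^ 2 = 0) :
    ∀ x ∈ ball (0 : EE n) R, h x = 0 := by
  have c2 : ContinuousOn (fun x => h x ^ 2) (closedBall 0 R) := hc.pow 2
  rw [setIntegral_eq_zero_iff_of_nonneg_ae (Eventually.of_forall fun x => sq_nonneg _) c2.intBall] at h0
  have := Measure.eqOn_open_of_ae_eq h0 isOpen_ball (c2.mono ball_subset_closedBall) continuousOn_const
  intro x hx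
  simpa using this hx

lemma zero_closed {n : ℕ} {R : ℝ} (hR : 0 < R) {h : EE n → ℝ}
    (hc : ContinuousOn h (closedBall 0 R)) (h0 : ∀ x ∈ ball (0 : EE n) R, h x = 0) :
    ∀ x ∈ closedBall (0 : EE n) R, h x = 0 := by
  intro x hx
  have := closure_lip hR hc (L := 0) (fun x hx y hy => by simp [h0 x hx, h0 y hy]) x hx 0
    (mem_closedBall_self hR.le)
  rw [h0 0 (mem_ball_self hR)] at this
  simpa using this

lemma hRefl_hRefl {n : ℕ} (e x : EE n) : hRefl e (hRefl e x) = x :=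
  Submodule.reflection_reflection _ _

lemma hRefl_inner {n : ℕ} (e x y : EE n) : inner ℝ (hRefl e x) y = inner ℝ x (hRefl e y) := by
  rw [← LinearIsometryEquiv.inner_map_map (hRefl e) x, hRefl_hRefl]

lemma hRefl_cb {n : ℕ} {R : ℝ} (e : EE n) {x : EE n} (hx : x ∈ closedBall (0 : EE n) R) :
    hRefl e x ∈ closedBall (0 : EE n) R := by
  rw [mem_closedBall_zero_iff, LinearIsometryEquiv.norm_map]; simpa using hx

lemma hRefl_b {n : ℕ} {R : ℝ} (e : EE n) {x : EE n} (hx : x ∈ ball (0 : EE n) R) :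
    hRefl e x ∈ ball (0 : EE n) R := by
  rw [mem_ball_zero_iff, LinearIsometryEquiv.norm_map]; simpa using hx

lemma hRefl_int {n : ℕ} {R : ℝ} (e : EE n) (h : EE n → ℝ) :
    ∫ x in ball (0 : EE n) R, h (hRefl e x) = ∫ x in ball (0 : EE n) R, h x := by
  have := (LinearIsometryEquiv.measurePreserving (hRefl e)).setIntegral_preimage_emb
    (hRefl e).toHomeomorph.measurableEmbedding h (ball (0 : EE n) R)
  have hs : (hRefl e) ⁻¹' (ball (0 : EE n) R) = ball (0 : EE n) R := by
    ext x; simp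
  rw [hs] at this
  exact this

section
variable {n : ℕ} {R : ℝ} {v w : EE n → ℝ} {V W : EE n → EE n}

lemma C1B.refl (h : C1B R v V) (e : EE n) :
    C1B R (fun x => v (hRefl e x)) (fun x => hRefl e (V (hRefl e x))) := by
  have hs : ContinuousOn (hRefl e) (closedBall 0 R) := (hRefl e).continuous.continuousOn
  refine ⟨h.cv.comp hs fun x hx => hRefl_cb e hx,
    (hRefl e).continuous.comp_continuousOn (h.cV.comp hs fun x hx => hRefl_cb e hx), fun x hx => ?_⟩
  have h1 := (h.d _ (hRefl_b e hx)).comp x (hRefl e).toContinuousLinearEquiv.hasFDerivAt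
  have e' : innerSL ℝ (hRefl e (V (hRefl e x))) = (innerSL ℝ (V (hRefl e x))).comp
      ((hRefl e).toContinuousLinearEquiv : EE n →L[ℝ] EE n) := by
    ext y; simp [hRefl_inner]
  rw [e']
  exact h1

lemma C1B.lin (h : C1B R v V) (k : C1B R w W) (a b : ℝ) :
    C1B R (fun x => a * v x + b * w x) (fun x => a • V x + b • W x) := by
  have c1 : ContinuousOn (fun x => a • V x) (closedBall 0 R) := h.cV.const_smul a
  have c2 : ContinuousOn (fun x => b • W x) (closedBall 0 R) := k.cV.const_smul b
  refine ⟨(continuousOn_const.mul h.cv).add (continuousOn_const.mul k.cv),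
    c1.add c2, fun x hx => ?_⟩
  have := ((h.d x hx).const_mul a).add ((k.d x hx).const_mul b)
  have e : innerSL ℝ (a • V x + b • W x) = a • innerSL ℝ (V x) + b • innerSL ℝ (W x) := by
    ext y; simp
  rw [e]
  exact this
end

/-- compact class of competitors -/
structure Cls {n : ℕ} (R M L lam q : ℝ) (v : EE n → ℝ) (V : EE n → EE n) : Prop where
  c : C1B R v V
  bv : ∀ x ∈ closedBall (0 : EE n) R, ‖v x‖ ≤ M
  bV : ∀ x ∈ closedBall (0 : EE n) R, ‖V x‖ ≤ M
  lv : ∀ x ∈ closedBall (0 : EE n) R, ∀ y ∈ closedBall (0 : EE n) R, ‖v x - v y‖ ≤ L * ‖x - y‖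
  lV : ∀ x ∈ closedBall (0 : EE n) R, ∀ y ∈ closedBall (0 : EE n) R, ‖V x - V y‖ ≤ L * ‖x - y‖
  mean : ∫ x in ball (0 : EE n) R, v x = 0
  hQ : (∫ x in ball (0 : EE n) R, ‖V x‖ ^ 2) - lam * ∫ x in ball (0 : EE n) R, v x ^ 2 ≤ q

theorem Cls.sym {n : ℕ} (hn : 1 ≤ n) {R : ℝ} (hR : 0 < R) {lam : ℝ} (hlam : 0 < lam)
    (hE : HasEig n R lam) {M L q : ℝ} {v : EE n → ℝ} {V : EE n → EE n}
    (h : Cls R M L lam q v V) {e : EE n} (he : e ≠ 0) :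
    Cls R M L lam q (fun x => 2⁻¹ * v x + 2⁻¹ * v (hRefl e x))
      (fun x => (2⁻¹ : ℝ) • V x + (2⁻¹ : ℝ) • hRefl e (V (hRefl e x))) ∧
    (∫ x in ball (0 : EE n) R, v x ^ 2) =
      (∫ x in ball (0 : EE n) R, (2⁻¹ * v x + 2⁻¹ * v (hRefl e x)) ^ 2) +
      ∫ x in ball (0 : EE n) R, (2⁻¹ * v x + -2⁻¹ * v (hRefl e x)) ^ 2 := by
  have hs := h.c.refl e
  have hP := h.c.lin hs 2⁻¹ 2⁻¹
  have hM := h.c.lin hs 2⁻¹ (-2⁻¹)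
  have iP : IntegrableOn (fun x => (2⁻¹ * v x + 2⁻¹ * v (hRefl e x)) ^ 2) (ball 0 R) :=
    (hP.cv.pow 2).intBall
  have iM : IntegrableOn (fun x => (2⁻¹ * v x + -2⁻¹ * v (hRefl e x)) ^ 2) (ball 0 R) :=
    (hM.cv.pow 2).intBall
  have iv : IntegrableOn (fun x => 2⁻¹ * v x ^ 2) (ball 0 R) :=
    (continuousOn_const.mul (h.c.cv.pow 2)).intBall
  have iv' : IntegrableOn (fun x => 2⁻¹ * v (hRefl e x) ^ 2) (ball 0 R) :=
    (continuousOn_const.mul (hs.cv.pow 2)).intBall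
  have jP : IntegrableOn (fun x => ‖(2⁻¹ : ℝ) • V x + (2⁻¹ : ℝ) • hRefl e (V (hRefl e x))‖ ^ 2)
    (ball 0 R) := (hP.cV.norm.pow 2).intBall
  have jM : IntegrableOn (fun x => ‖(2⁻¹ : ℝ) • V x + (-2⁻¹ : ℝ) • hRefl e (V (hRefl e x))‖ ^ 2)
    (ball 0 R) := (hM.cV.norm.pow 2).intBall
  have jv : IntegrableOn (fun x => 2⁻¹ * ‖V x‖ ^ 2) (ball 0 R) :=
    (continuousOn_const.mul (h.c.cV.norm.pow 2)).intBall
  have jv' : IntegrableOn (fun x => 2⁻¹ * ‖V (hRefl e x)‖ ^ 2) (ball 0 R) := by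
    have c : ContinuousOn (fun x => V (hRefl e x)) (closedBall 0 R) :=
      h.c.cV.comp (hRefl e).continuous.continuousOn fun x hx => hRefl_cb e hx
    exact (continuousOn_const.mul (c.norm.pow 2)).intBall
  have N : (∫ x in ball (0 : EE n) R, v x ^ 2) =
      (∫ x in ball (0 : EE n) R, (2⁻¹ * v x + 2⁻¹ * v (hRefl e x)) ^ 2) +
      ∫ x in ball (0 : EE n) R, (2⁻¹ * v x + -2⁻¹ * v (hRefl e x)) ^ 2 := by
    rw [← integral_add iP iM]
    have : ∫ x in ball (0 : EE n) R, ((2⁻¹ * v x + 2⁻¹ * v (hRefl e x)) ^ 2 +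
        (2⁻¹ * v x + -2⁻¹ * v (hRefl e x)) ^ 2) =
        ∫ x in ball (0 : EE n) R, (2⁻¹ * v x ^ 2 + 2⁻¹ * v (hRefl e x) ^ 2) := by
      refine setIntegral_congr_fun measurableSet_ball fun x hx => ?_
      ring
    rw [this, integral_add iv iv', integral_const_mul, integral_const_mul,
      hRefl_int e (fun x => v x ^ 2)]
    ring
  have NV : (∫ x in ball (0 : EE n) R, ‖V x‖ ^ 2) =
      (∫ x in ball (0 : EE n) R, ‖(2⁻¹ : ℝ) • V x + (2⁻¹ : ℝ) • hRefl e (V (hRefl e x))‖ ^ 2) +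
      ∫ x in ball (0 : EE n) R, ‖(2⁻¹ : ℝ) • V x + (-2⁻¹ : ℝ) • hRefl e (V (hRefl e x))‖ ^ 2 := by
    rw [← integral_add jP jM]
    have : ∫ x in ball (0 : EE n) R,
        (‖(2⁻¹ : ℝ) • V x + (2⁻¹ : ℝ) • hRefl e (V (hRefl e x))‖ ^ 2 +
        ‖(2⁻¹ : ℝ) • V x + (-2⁻¹ : ℝ) • hRefl e (V (hRefl e x))‖ ^ 2) =
        ∫ x in ball (0 : EE n) R, (2⁻¹ * ‖V x‖ ^ 2 + 2⁻¹ * ‖V (hRefl e x)‖ ^ 2) := by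
      refine setIntegral_congr_fun measurableSet_ball fun x hx => ?_
      simp only [norm_add_sq_real, norm_smul, inner_smul_left, inner_smul_right,
        LinearIsometryEquiv.norm_map, mul_pow, norm_neg, conj_trivial]
      norm_num
      ring
    rw [this, integral_add jv jv', integral_const_mul, integral_const_mul,
      hRefl_int e (fun x => ‖V x‖ ^ 2)]
    ring
  have pic := picone_odd hn hR hlam hE he hM (fun x hx => by rw [hRefl_hRefl]; ring)
  refine ⟨⟨hP, ?_, ?_, ?_, ?_, ?_, ?_⟩, N⟩
  · intro x hx
    have h1 := h.bv x hx
    have h2 := h.bv _ (hRefl_cb e hx)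
    calc _ ≤ ‖2⁻¹ * v x‖ + ‖2⁻¹ * v (hRefl e x)‖ := norm_add_le _ _
      _ ≤ M := by rw [norm_mul, norm_mul]; norm_num at *; linarith
  · intro x hx
    have h1 := h.bV x hx
    have h2 := h.bV _ (hRefl_cb e hx)
    calc _ ≤ ‖(2⁻¹:ℝ) • V x‖ + ‖(2⁻¹:ℝ) • hRefl e (V (hRefl e x))‖ := norm_add_le _ _
      _ ≤ M := by
        rw [norm_smul, norm_smul, LinearIsometryEquiv.norm_map]; norm_num at *; linarith
  · intro x hx y hy
    have h1 := h.lv x hx y hy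
    have h2 := h.lv _ (hRefl_cb e hx) _ (hRefl_cb e hy)
    rw [← map_sub, LinearIsometryEquiv.norm_map] at h2
    have e1 : (2⁻¹ * v x + 2⁻¹ * v (hRefl e x)) - (2⁻¹ * v y + 2⁻¹ * v (hRefl e y)) =
      2⁻¹ * (v x - v y) + 2⁻¹ * (v (hRefl e x) - v (hRefl e y)) := by ring
    calc _ = ‖2⁻¹ * (v x - v y) + 2⁻¹ * (v (hRefl e x) - v (hRefl e y))‖ := by rw [e1]
      _ ≤ ‖2⁻¹ * (v x - v y)‖ + ‖2⁻¹ * (v (hRefl e x) - v (hRefl e y))‖ := norm_add_le _ _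
      _ ≤ _ := by
        rw [norm_mul, norm_mul, show ‖(2⁻¹:ℝ)‖ = 2⁻¹ by norm_num]; linarith
  · intro x hx y hy
    have h1 := h.lV x hx y hy
    have h2 := h.lV _ (hRefl_cb e hx) _ (hRefl_cb e hy)
    rw [← map_sub, LinearIsometryEquiv.norm_map] at h2
    have e1 : ((2⁻¹ : ℝ) • V x + (2⁻¹ : ℝ) • hRefl e (V (hRefl e x))) -
        ((2⁻¹ : ℝ) • V y + (2⁻¹ : ℝ) • hRefl e (V (hRefl e y))) =
      (2⁻¹ : ℝ) • (V x - V y) + (2⁻¹ : ℝ) • hRefl e (V (hRefl e x) - V (hRefl e y)) := by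
      rw [map_sub]; module
    calc _ = ‖(2⁻¹ : ℝ) • (V x - V y) + (2⁻¹ : ℝ) • hRefl e (V (hRefl e x) - V (hRefl e y))‖ := by
          rw [e1]
      _ ≤ ‖(2⁻¹ : ℝ) • (V x - V y)‖ + ‖(2⁻¹ : ℝ) • hRefl e (V (hRefl e x) - V (hRefl e y))‖ :=
          norm_add_le _ _
      _ ≤ _ := by
        rw [norm_smul, norm_smul, LinearIsometryEquiv.norm_map,
          show ‖(2⁻¹:ℝ)‖ = 2⁻¹ by norm_num]; linarith
  · have i1 : IntegrableOn (fun x => 2⁻¹ * v x) (ball 0 R) := h.c.cv.intBall.const_mul _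
    have i2 : IntegrableOn (fun x => 2⁻¹ * v (hRefl e x)) (ball 0 R) := hs.cv.intBall.const_mul _
    rw [integral_add i1 i2, integral_const_mul, integral_const_mul, hRefl_int e v, h.mean]
    simp
  · have := h.hQ
    rw [N, NV] at this
    linarith

lemma int_lim {n : ℕ} {R : ℝ} {f : ℕ → EE n → ℝ} {g : EE n → ℝ} {C : ℝ}
    (hc : ∀ k, ContinuousOn (f k) (closedBall 0 R))
    (hC : ∀ k, ∀ x ∈ closedBall (0 : EE n) R, ‖f k x‖ ≤ C)
    (hl : ∀ x ∈ closedBall (0 : EE n) R, Tendsto (fun k => f k x) atTop (𝓝 (g x))) :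
    Tendsto (fun k => ∫ x in ball (0 : EE n) R, f k x) atTop (𝓝 (∫ x in ball (0 : EE n) R, g x)) := by
  apply tendsto_integral_of_dominated_convergence (fun _ => C)
  · intro k; exact ((hc k).intBall).aestronglyMeasurable
  · exact (continuousOn_const (c := C)).intBall
  · intro k
    exact (ae_restrict_iff' measurableSet_ball).2
      (Eventually.of_forall fun x hx => hC k x (ball_subset_closedBall hx))
  · exact (ae_restrict_iff' measurableSet_ball).2
      (Eventually.of_forall fun x hx => hl x (ball_subset_closedBall hx))

theorem limit_cls {n : ℕ} {R M L lam q : ℝ} {v : ℕ → EE n → ℝ} {V : ℕ → EE n → EE n}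
    {w : EE n → ℝ} {W : EE n → EE n} (h : ∀ k, Cls R M L lam q (v k) (V k))
    (hv : TendstoUniformlyOn v w atTop (closedBall 0 R))
    (hV : TendstoUniformlyOn V W atTop (closedBall 0 R)) :
    Cls R M L lam q w W ∧ Tendsto (fun k => ∫ x in ball (0 : EE n) R, v k x ^ 2) atTop
      (𝓝 (∫ x in ball (0 : EE n) R, w x ^ 2)) := by
  have pv : ∀ x ∈ closedBall (0 : EE n) R, Tendsto (fun k => v k x) atTop (𝓝 (w x)) :=
    fun x hx => hv.tendsto_at hx
  have pV : ∀ x ∈ closedBall (0 : EE n) R, Tendsto (fun k => V k x) atTop (𝓝 (W x)) :=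
    fun x hx => hV.tendsto_at hx
  have cw : ContinuousOn w (closedBall 0 R) :=
    hv.continuousOn (Eventually.of_forall fun k => (h k).c.cv).frequently
  have cW : ContinuousOn W (closedBall 0 R) :=
    hV.continuousOn (Eventually.of_forall fun k => (h k).c.cV).frequently
  have i1 : Tendsto (fun k => ∫ x in ball (0 : EE n) R, v k x) atTop
      (𝓝 (∫ x in ball (0 : EE n) R, w x)) :=
    int_lim (fun k => (h k).c.cv) (fun k => (h k).bv) pv
  have i2 : Tendsto (fun k => ∫ x in ball (0 : EE n) R, v k x ^ 2) atTop
      (𝓝 (∫ x in ball (0 : EE n) R, w x ^ 2)) := by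
    refine int_lim (C := M ^ 2) (fun k => (h k).c.cv.pow 2) (fun k x hx => ?_)
      (fun x hx => (pv x hx).pow 2)
    rw [norm_pow]
    exact pow_le_pow_left₀ (norm_nonneg _) ((h k).bv x hx) 2
  have i3 : Tendsto (fun k => ∫ x in ball (0 : EE n) R, ‖V k x‖ ^ 2) atTop
      (𝓝 (∫ x in ball (0 : EE n) R, ‖W x‖ ^ 2)) := by
    refine int_lim (C := M ^ 2) (fun k => (h k).c.cV.norm.pow 2) (fun k x hx => ?_)
      (fun x hx => (pV x hx).norm.pow 2)
    rw [norm_pow, norm_norm]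
    exact pow_le_pow_left₀ (norm_nonneg _) ((h k).bV x hx) 2
  refine ⟨⟨⟨cw, cW, fun x hx => ?_⟩, ?_, ?_, ?_, ?_, ?_, ?_⟩, i2⟩
  · have hd : TendstoUniformlyOn (fun k x => innerSL ℝ (V k x)) (fun x => innerSL ℝ (W x)) atTop
        (ball (0 : EE n) R) :=
      (innerSL ℝ (E := EE n)).uniformContinuous.comp_tendstoUniformlyOn
        (hV.mono ball_subset_closedBall)
    exact hasFDerivAt_of_tendstoUniformlyOn isOpen_ball hd
      (fun k x hx => (h k).c.d x hx) (fun x hx => pv x (ball_subset_closedBall hx)) hx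
  · intro x hx
    exact le_of_tendsto' (pv x hx).norm fun k => (h k).bv x hx
  · intro x hx
    exact le_of_tendsto' (pV x hx).norm fun k => (h k).bV x hx
  · intro x hx y hy
    exact le_of_tendsto' ((pv x hx).sub (pv y hy)).norm fun k => (h k).lv x hx y hy
  · intro x hx y hy
    exact le_of_tendsto' ((pV x hx).sub (pV y hy)).norm fun k => (h k).lV x hx y hy
  · refine tendsto_nhds_unique i1 ?_
    simp only [(h _).mean]
    exact tendsto_const_nhds
  · exact le_of_tendsto' (i3.sub (i2.const_mul lam)) fun k => (h k).hQ

theorem extract_cls {n : ℕ} {R M L lam q : ℝ} (hL0 : 0 ≤ L)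
    {v : ℕ → EE n → ℝ} {V : ℕ → EE n → EE n}
    (h : ∀ k, Cls R M L lam q (v k) (V k)) :
    ∃ (w : EE n → ℝ) (W : EE n → EE n) (φ : ℕ → ℕ), StrictMono φ ∧
      TendstoUniformlyOn (fun k => v (φ k)) w atTop (closedBall 0 R) ∧
      TendstoUniformlyOn (fun k => V (φ k)) W atTop (closedBall 0 R) := by
  classical
  have : CompactSpace (closedBall (0 : EE n) R) :=
    isCompact_iff_compactSpace.1 (isCompact_closedBall _ _)
  have hcont : ∀ k, Continuous (fun x : closedBall (0 : EE n) R => (v k x, V k x)) := fun k =>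
    (continuousOn_iff_continuous_domRestrict.1 (h k).c.cv).prodMk
      (continuousOn_iff_continuous_domRestrict.1 (h k).c.cV)
  let F : ℕ → BoundedContinuousFunction (closedBall (0 : EE n) R) (ℝ × EE n) := fun k =>
    BoundedContinuousFunction.mkOfCompact ⟨_, hcont k⟩
  have hF : ∀ k (x : closedBall (0 : EE n) R), F k x = (v k x, V k x) := fun k x => rfl
  have hcomp : IsCompact (closure (range F)) := by
    apply BoundedContinuousFunction.arzela_ascoli (closedBall (0 : ℝ × EE n) M)
      (isCompact_closedBall _ _)
    · rintro f x ⟨k, rfl⟩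
      rw [hF, mem_closedBall_zero_iff, Prod.norm_def]
      exact max_le ((h k).bv x x.2) ((h k).bV x x.2)
    · apply UniformEquicontinuous.equicontinuous
      refine LipschitzWith.uniformEquicontinuous _ ⟨L, hL0⟩ ?_
      rintro ⟨f, k, rfl⟩
      refine LipschitzWith.of_dist_le_mul fun x y => ?_
      change dist (F k x) (F k y) ≤ L * dist x y
      rw [hF, hF, Prod.dist_eq, Subtype.dist_eq, dist_eq_norm (x : EE n)]
      refine max_le ?_ ?_
      · rw [dist_eq_norm]; exact (h k).lv x x.2 y y.2
      · rw [dist_eq_norm]; exact (h k).lV x x.2 y y.2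
  obtain ⟨g, -, φ, hφ, hg⟩ := hcomp.tendsto_subseq (x := F) fun k => subset_closure ⟨k, rfl⟩
  rw [BoundedContinuousFunction.tendsto_iff_tendstoUniformly] at hg
  refine ⟨fun x => if hx : x ∈ closedBall (0 : EE n) R then (g ⟨x, hx⟩).1 else 0,
    fun x => if hx : x ∈ closedBall (0 : EE n) R then (g ⟨x, hx⟩).2 else 0, φ, hφ, ?_, ?_⟩
  · rw [Metric.tendstoUniformlyOn_iff]
    rw [Metric.tendstoUniformly_iff] at hg
    intro ε hε
    filter_upwards [hg ε hε] with k hk x hx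
    have := hk ⟨x, hx⟩
    rw [Function.comp_apply, hF, Prod.dist_eq] at this
    rw [dif_pos hx]
    exact (le_max_left _ _).trans_lt this
  · rw [Metric.tendstoUniformlyOn_iff]
    rw [Metric.tendstoUniformly_iff] at hg
    intro ε hε
    filter_upwards [hg ε hε] with k hk x hx
    have := hk ⟨x, hx⟩
    rw [Function.comp_apply, hF, Prod.dist_eq] at this
    rw [dif_pos hx]
    exact (le_max_right _ _).trans_lt this

theorem poincare {n : ℕ} (hn : 1 ≤ n) {R : ℝ} (hR : 0 < R) {lam : ℝ} (hlam : 0 < lam)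
    (hE : HasEig n R lam) {L : ℝ} (hL0 : 0 ≤ L) {u : EE n → ℝ} {U : EE n → EE n} (hu : C1B R u U)
    (lu : ∀ x ∈ closedBall (0 : EE n) R, ∀ y ∈ closedBall (0 : EE n) R, ‖u x - u y‖ ≤ L * ‖x - y‖)
    (lU : ∀ x ∈ closedBall (0 : EE n) R, ∀ y ∈ closedBall (0 : EE n) R, ‖U x - U y‖ ≤ L * ‖x - y‖)
    (hmean : ∫ x in ball (0 : EE n) R, u x = 0) :
    lam * ∫ x in ball (0 : EE n) R, u x ^ 2 ≤ ∫ x in ball (0 : EE n) R, ‖U x‖ ^ 2 := by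
  obtain ⟨M1, hM1⟩ := (isCompact_closedBall (0 : EE n) R).exists_bound_of_continuousOn hu.cv
  obtain ⟨M2, hM2⟩ := (isCompact_closedBall (0 : EE n) R).exists_bound_of_continuousOn hu.cV
  set M := max M1 M2
  set q := (∫ x in ball (0 : EE n) R, ‖U x‖ ^ 2) - lam * ∫ x in ball (0 : EE n) R, u x ^ 2 with hq
  have hucls : Cls R M L lam q u U :=
    ⟨hu, fun x hx => (hM1 x hx).trans (le_max_left _ _),
      fun x hx => (hM2 x hx).trans (le_max_right _ _), lu, lU, hmean, le_rfl⟩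
  set T : Set ℝ := {t | ∃ v V, Cls R M L lam q v V ∧ t = ∫ x in ball (0 : EE n) R, v x ^ 2} with hT
  have hTne : T.Nonempty := ⟨_, u, U, hucls, rfl⟩
  have hTb : BddBelow T := by
    refine ⟨0, ?_⟩
    rintro t ⟨v, V, -, rfl⟩
    exact integral_nonneg fun x => sq_nonneg _
  obtain ⟨t, -, ht, htm⟩ := exists_seq_tendsto_sInf hTne hTb
  choose v V hvV htv using htm
  obtain ⟨w, W, φ, hφ, h1, h2⟩ := extract_cls hL0 hvV
  obtain ⟨hw, hwl⟩ := limit_cls (fun k => hvV (φ k)) h1 h2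
  have hmin : ∫ x in ball (0 : EE n) R, w x ^ 2 = sInf T := by
    refine tendsto_nhds_unique hwl ?_
    have := ht.comp hφ.tendsto_atTop
    refine this.congr fun k => ?_
    rw [Function.comp_apply, htv]
  have hrad : IsRad R w := by
    intro x hx y hy hxy
    by_cases hne : x = y
    · rw [hne]
    have he : x - y ≠ 0 := sub_ne_zero.2 hne
    obtain ⟨hs, hN⟩ := hw.sym hn hR hlam hE he
    have hle := csInf_le hTb ⟨_, _, hs, rfl⟩
    have hz : ∫ z in ball (0 : EE n) R, (2⁻¹ * w z + -2⁻¹ * w (hRefl (x - y) z)) ^ 2 = 0 := by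
      refine le_antisymm ?_ (integral_nonneg fun x => sq_nonneg _)
      rw [← hmin] at hle
      linarith
    have hcd := (hw.c.lin (hw.c.refl (x - y)) 2⁻¹ (-2⁻¹)).cv
    have := zero_closed hR hcd (zero_of_int hcd hz) x hx
    have hr : hRefl (x - y) x = y := Submodule.reflection_sub hxy
    rw [hr] at this
    linarith
  have := radial_ineq hn hR hlam hE hw.c hrad hw.mean
  have := hw.hQ
  linarith

/-- **Rayleigh-quotient lower bound on a ball for `Δ²` with Neumann conditions.**
Let `n ≥ 2`, `R > 0`, and let `u` be smooth on the closed ball `B_R(0) ⊂ ℝⁿ` with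
`∫_{B_R(0)} u = 0` and `∂u/∂n = ∂(Δu)/∂n = 0` on the boundary sphere. Then
`∫ |Δu|² ≥ μ₁(B_R(0))² ∫ |u|²`, with equality iff `Δu = −μ₁(B_R(0))·u` in the ball. -/
theorem biharmonic_rayleigh_bound_ball {n : ℕ} (hn : 2 ≤ n) (R : ℝ) (hR : 0 < R) (μ₁ : ℝ)
    (hμ : IsLeast {μ : ℝ | 0 < μ ∧ IsLapNeumannEigenvalueBall n R μ} μ₁)
    (u : EuclideanSpace ℝ (Fin n) → ℝ)
    (hu_smooth : ContDiffOn ℝ (⊤ : ℕ∞) u (closedBall 0 R))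
    (hu_mean : (∫ x in ball (0 : EuclideanSpace ℝ (Fin n)) R, u x) = 0)
    (hu_bd : ∀ x : EuclideanSpace ℝ (Fin n), ‖x‖ = R →
      fderivWithin ℝ u (closedBall 0 R) x (‖x‖⁻¹ • x) = 0)
    (hu_bd' : ∀ x : EuclideanSpace ℝ (Fin n), ‖x‖ = R →
      fderivWithin ℝ (lapWithin (closedBall 0 R) u) (closedBall 0 R) x (‖x‖⁻¹ • x) = 0) :
    (∫ x in ball (0 : EuclideanSpace ℝ (Fin n)) R, (lapWithin (closedBall 0 R) u x) ^ 2) ≥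
      μ₁ ^ 2 * ∫ x in ball (0 : EuclideanSpace ℝ (Fin n)) R, (u x) ^ 2 ∧
    ((∫ x in ball (0 : EuclideanSpace ℝ (Fin n)) R, (lapWithin (closedBall 0 R) u x) ^ 2) =
        μ₁ ^ 2 * (∫ x in ball (0 : EuclideanSpace ℝ (Fin n)) R, (u x) ^ 2) ↔
      ∀ x ∈ ball (0 : EuclideanSpace ℝ (Fin n)) R,
        lapWithin (closedBall 0 R) u x = -μ₁ * u x) := by
  have hn1 : 1 ≤ n := by omega
  obtain ⟨lam, hlam, hE⟩ := exists_eig' hn1 hR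
  have hμl : μ₁ ≤ lam := hμ.2 ⟨hlam, hE.isEig hn1 hR⟩
  have hμ0 : 0 < μ₁ := hμ.1.1
  have hud : UniqueDiffOn ℝ (closedBall (0 : EE n) R) := udo hR
  have hu2 : ContDiffOn ℝ 2 u (closedBall 0 R) := hu_smooth.of_le (WithTop.coe_le_coe.2 (le_top : (2 : ℕ∞) ≤ ⊤))
  have hu1 : ContDiffOn ℝ 1 u (closedBall 0 R) := hu2.of_le (by norm_num)
  have hnb : ∀ x ∈ ball (0 : EE n) R, closedBall (0 : EE n) R ∈ 𝓝 x := fun x hx =>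
    mem_of_superset (isOpen_ball.mem_nhds hx) ball_subset_closedBall
  set G : EE n → (EE n →L[ℝ] ℝ) := fderivWithin ℝ u (closedBall 0 R) with hG
  have hG1 : ContDiffOn ℝ 1 G (closedBall 0 R) := hu2.fderivWithin hud (by norm_num)
  set V : EE n → EE n := fun x => (InnerProductSpace.toDual ℝ (EE n)).symm (G x) with hV
  have hVin : ∀ x y, inner ℝ (V x) y = G x y := fun x y =>
    InnerProductSpace.toDual_symm_apply
  have hVsl : ∀ x, innerSL ℝ (V x) = G x := fun x => by ext y; exact hVin x y
  have hVi : ∀ x i, V x i = G x (EuclideanSpace.single i 1) := fun x i => by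
    rw [← hVin, real_inner_comm, EuclideanSpace.inner_single_left]; simp
  have hC : C1B R u V := by
    refine ⟨hu1.continuousOn, (InnerProductSpace.toDual ℝ (EE n)).symm.continuous.comp_continuousOn
      hG1.continuousOn, fun x hx => ?_⟩
    rw [hVsl]
    exact ((hu1.differentiableOn (by norm_num) x
      (ball_subset_closedBall hx)).hasFDerivWithinAt).hasFDerivAt (hnb x hx)
  obtain ⟨L1, hL10, hL1⟩ := contDiffOn_lip hR hu1
  obtain ⟨L2, hL20, hL2⟩ := contDiffOn_lip hR hG1
  have hP := poincare hn1 hR hlam hE (L := max L1 L2) (le_max_of_le_left hL10) hC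
    (fun x hx y hy => (hL1 x hx y hy).trans
      (mul_le_mul_of_nonneg_right (le_max_left _ _) (norm_nonneg _)))
    (fun x hx y hy => by
      have : V x - V y = (InnerProductSpace.toDual ℝ (EE n)).symm (G x - G y) := by
        simp only [hV, map_sub]
      rw [this, LinearIsometryEquiv.norm_map]
      exact (hL2 x hx y hy).trans
        (mul_le_mul_of_nonneg_right (le_max_right _ _) (norm_nonneg _)))
    hu_mean
  have hGi : ∀ i : Fin n, ContDiffOn ℝ 1 (fun y => G y (EuclideanSpace.single i 1))
      (closedBall 0 R) := fun i => hG1.clm_apply contDiffOn_const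
  set D : Fin n → EE n → ℝ := fun i x =>
    fderivWithin ℝ (fun y => G y (EuclideanSpace.single i 1)) (closedBall 0 R) x
      (EuclideanSpace.single i 1) with hD
  have hDc : ∀ i, ContinuousOn (D i) (closedBall 0 R) := fun i =>
    ((hGi i).continuousOn_fderivWithin hud (by norm_num)).clm_apply continuousOn_const
  have hlapD : ∀ x, ∑ i, D i x = lapWithin (closedBall 0 R) u x := fun x => rfl
  have hlc : ContinuousOn (lapWithin (closedBall 0 R) u) (closedBall 0 R) := by
    have : ContinuousOn (fun x => ∑ i, D i x) (closedBall 0 R) :=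
      continuousOn_finsetSum _ fun i _ => hDc i
    exact this
  obtain ⟨M0, hM0⟩ := (isCompact_closedBall (0 : EE n) R).exists_bound_of_continuousOn hC.cv
  have hrc : ContDiffOn ℝ 1 (fun x => G x x) (closedBall 0 R) := hG1.clm_apply contDiffOn_id
  obtain ⟨L3, hL30, hL3⟩ := contDiffOn_lip hR hrc
  have hbb := bdry_bound hn1 hR hL3 (fun x hx => by
    have := hu_bd x hx
    rw [map_smul, smul_eq_mul, hx] at this
    exact (mul_eq_zero.1 this).resolve_left (inv_ne_zero hR.ne'))
  have iul : IntegrableOn (fun x => u x * lapWithin (closedBall 0 R) u x) (ball 0 R) :=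
    (hC.cv.mul hlc).intBall
  have iVV : IntegrableOn (fun x => ‖V x‖ ^ 2) (ball 0 R) := (hC.cV.norm.pow 2).intBall
  have iVV' : IntegrableOn (fun x => inner ℝ (V x) (V x)) (ball 0 R) := by
    simpa only [real_inner_self_eq_norm_sq] using iVV
  have hgreen : ∫ x in ball (0 : EE n) R, (u x * lapWithin (closedBall 0 R) u x
      + inner ℝ (V x) (V x)) = 0 := by
    refine div_mul_zero hR u V V D _ (M0 * L3) hC.d (hC.cV.mono ball_subset_closedBall) ?_
      (hC.cV.mono ball_subset_closedBall) (fun i => (hDc i).mono ball_subset_closedBall)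
      (fun x hx => hlapD x) ?_ (iul.add iVV')
    · intro i x hx
      simp only [hVi]
      exact (((hGi i).differentiableOn (by norm_num) x
        (ball_subset_closedBall hx)).hasFDerivWithinAt.hasFDerivAt (hnb x hx)).hasLineDerivAt _
    · intro x hx
      rw [hVin, abs_mul, mul_assoc]
      have h1 := hM0 x (ball_subset_closedBall hx)
      exact mul_le_mul h1 (hbb x hx) (abs_nonneg _) ((norm_nonneg _).trans h1)
  simp only [real_inner_self_eq_norm_sq] at hgreen
  rw [integral_add iul iVV] at hgreen
  have ill : IntegrableOn (fun x => lapWithin (closedBall 0 R) u x ^ 2) (ball 0 R) :=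
    (hlc.pow 2).intBall
  have iuu : IntegrableOn (fun x => u x ^ 2) (ball 0 R) := (hC.cv.pow 2).intBall
  have hcs : ContinuousOn (fun x => lapWithin (closedBall 0 R) u x + μ₁ * u x) (closedBall 0 R) :=
    hlc.add (continuousOn_const.mul hC.cv)
  have hexp : ∫ x in ball (0 : EE n) R, (lapWithin (closedBall 0 R) u x + μ₁ * u x) ^ 2 =
      (∫ x in ball (0 : EE n) R, lapWithin (closedBall 0 R) u x ^ 2) +
      (2 * μ₁) * (∫ x in ball (0 : EE n) R, u x * lapWithin (closedBall 0 R) u x) +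
      μ₁ ^ 2 * ∫ x in ball (0 : EE n) R, u x ^ 2 := by
    have j1 : IntegrableOn (fun x => (2 * μ₁) * (u x * lapWithin (closedBall 0 R) u x))
      (ball 0 R) := iul.const_mul _
    have j2 : IntegrableOn (fun x => μ₁ ^ 2 * u x ^ 2) (ball 0 R) := iuu.const_mul _
    have j3 : IntegrableOn (fun x => lapWithin (closedBall 0 R) u x ^ 2 +
      (2 * μ₁) * (u x * lapWithin (closedBall 0 R) u x)) (ball 0 R) := ill.add j1
    rw [← integral_const_mul, ← integral_const_mul, ← integral_add ill j1, ← integral_add j3 j2]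
    refine setIntegral_congr_fun measurableSet_ball fun x hx => ?_
    ring
  have hnn : 0 ≤ ∫ x in ball (0 : EE n) R, u x ^ 2 := integral_nonneg fun x => sq_nonneg _
  have hsn : 0 ≤ ∫ x in ball (0 : EE n) R, (lapWithin (closedBall 0 R) u x + μ₁ * u x) ^ 2 :=
    integral_nonneg fun x => sq_nonneg _
  have hP' : μ₁ * (μ₁ * ∫ x in ball (0 : EE n) R, u x ^ 2) ≤
      μ₁ * ∫ x in ball (0 : EE n) R, ‖V x‖ ^ 2 :=
    mul_le_mul_of_nonneg_left ((mul_le_mul_of_nonneg_right hμl hnn).trans hP) hμ0.le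
  have hul : (∫ x in ball (0 : EE n) R, u x * lapWithin (closedBall 0 R) u x) =
      - ∫ x in ball (0 : EE n) R, ‖V x‖ ^ 2 := by linarith
  rw [hul] at hexp
  refine ⟨by nlinarith, fun heq => ?_, fun hpt => ?_⟩
  · have hz : ∫ x in ball (0 : EE n) R, (lapWithin (closedBall 0 R) u x + μ₁ * u x) ^ 2 = 0 := by
      nlinarith
    intro x hx
    have := zero_of_int hcs hz x hx
    linarith
  · rw [← integral_const_mul]
    refine setIntegral_congr_fun measurableSet_ball fun x hx => ?_
    rw [hpt x hx]
    ring
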